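/- arXiv:2008.05430 — 6 statements merged into one kernel-verified Lean document; each statement's English description precedes it below -/
import Mathlib

section
/- Let k ≥ l ≥ 1 be integers. Then for every ε > 0 there exists a finite oriented graph G with s(G) ≥ OPT(k,l) − ε; that is, the supremum of s(G) over all finite oriented graphs G is at least OPT(k,l). -/
open scoped BigOperators

/-- The arc relation of the oriented star `S_{k,l}` on `Fin (k+l+1)`:
vertex `0` is the center, vertices `1,…,k` are the out-leaves and
vertices `k+1,…,k+l` are the in-leaves. -/
def StarArc (k l : ℕ) (a b : Fin (k + l + 1)) : Prop :=
  (a.val = 0 ∧ 1 ≤ b.val ∧ b.val ≤ k) ∨ (b.val = 0 ∧ k + 1 ≤ a.val)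

/-- `φ` witnesses an induced copy of `S_{k,l}` in the digraph with arc relation `A`:
it is injective and maps arcs to arcs and non-arcs to non-arcs. -/
def IsStarEmb (k l : ℕ) {V : Type*} (A : V → V → Prop) (φ : Fin (k + l + 1) → V) : Prop :=
  Function.Injective φ ∧ ∀ a b, StarArc k l a b ↔ A (φ a) (φ b)

/-- `s(G)`: the probability that a uniformly random map `V(S_{k,l}) → V(G)`
induces a copy of `S_{k,l}`. -/
noncomputable def starProb (k l : ℕ) (V : Type*) [Fintype V] (A : V → V → Prop) : ℝ :=
  (Nat.card {φ : Fin (k + l + 1) → V // IsStarEmb k l A φ} : ℝ) /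
    (Fintype.card V : ℝ) ^ (k + l + 1)

/-- The probability that a uniformly random map induces a copy of `S_{k,l}`
and moreover has property `P`. -/
noncomputable def starProbOn (k l : ℕ) {V : Type*} [Fintype V] (A : V → V → Prop)
    (P : (Fin (k + l + 1) → V) → Prop) : ℝ :=
  (Nat.card {φ : Fin (k + l + 1) → V // IsStarEmb k l A φ ∧ P φ} : ℝ) /
    (Fintype.card V : ℝ) ^ (k + l + 1)

/-- `s(z→v) = Pr[φ ∈ 𝒮 | φ z = v]`. -/
noncomputable def sCond (k l : ℕ) {V : Type*} [Fintype V] (A : V → V → Prop)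
    (z : Fin (k + l + 1)) (v : V) : ℝ :=
  (Nat.card {φ : Fin (k + l + 1) → V // IsStarEmb k l A φ ∧ φ z = v} : ℝ) /
    (Fintype.card V : ℝ) ^ (k + l)

/-- `Pr[φ ∈ 𝒮 ∧ P φ | φ(c) = v]`, where `c = 0` is the center of the star. -/
noncomputable def sCondOn (k l : ℕ) {V : Type*} [Fintype V] (A : V → V → Prop) (v : V)
    (P : (Fin (k + l + 1) → V) → Prop) : ℝ :=
  (Nat.card {φ : Fin (k + l + 1) → V // IsStarEmb k l A φ ∧ φ 0 = v ∧ P φ} : ℝ) /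
    (Fintype.card V : ℝ) ^ (k + l)

open Fin.NatCast in
/-- `s(v) = (s(c→v) + l·s(i→v) + k·s(o→v))/(m+1)`, where the center is `0`,
`k+1` is an in-leaf and `1` is an out-leaf. -/
noncomputable def sVert (k l : ℕ) {V : Type*} [Fintype V] (A : V → V → Prop) (v : V) : ℝ :=
  (sCond k l A 0 v + l * sCond k l A ((k + 1 : ℕ) : Fin (k + l + 1)) v
      + k * sCond k l A 1 v) / ((k : ℝ) + l + 1)

/-- `ρ(v)`: the proportion of vertices adjacent to `v`. -/
noncomputable def rho {V : Type*} [Fintype V] (A : V → V → Prop) (v : V) : ℝ :=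
  (Nat.card {u : V // A v u ∨ A u v} : ℝ) / (Fintype.card V : ℝ)

/-- `ρ⁺_B(v)`: the proportion of vertices that are out-neighbours of `v` lying in `B`. -/
noncomputable def rhoPIn {V : Type*} [Fintype V] (A : V → V → Prop) (B : Set V) (v : V) : ℝ :=
  (Nat.card {u : V // A v u ∧ u ∈ B} : ℝ) / (Fintype.card V : ℝ)

/-- `ρ⁻_B(v)`: the proportion of vertices that are in-neighbours of `v` lying in `B`. -/
noncomputable def rhoMIn {V : Type*} [Fintype V] (A : V → V → Prop) (B : Set V) (v : V) : ℝ :=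
  (Nat.card {u : V // A u v ∧ u ∈ B} : ℝ) / (Fintype.card V : ℝ)

/-- `ρ_B(v)`: the proportion of vertices adjacent to `v` lying in `B`. -/
noncomputable def rhoIn {V : Type*} [Fintype V] (A : V → V → Prop) (B : Set V) (v : V) : ℝ :=
  (Nat.card {u : V // (A v u ∨ A u v) ∧ u ∈ B} : ℝ) / (Fintype.card V : ℝ)

/-- `μ(B) = |B|/n`. -/
noncomputable def muSet {V : Type*} [Fintype V] (B : Set V) : ℝ :=
  (Nat.card B : ℝ) / (Fintype.card V : ℝ)

/-- `X`: the set of vertices of large degree, `ρ(v) ≥ 1/2`. -/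
def bigX {V : Type*} [Fintype V] (A : V → V → Prop) : Set V := {v | 1 / 2 ≤ rho A v}

/-- `Y = V(G) \ X`. -/
def bigY {V : Type*} [Fintype V] (A : V → V → Prop) : Set V := (bigX A)ᶜ

/-- `α = μ(X)`. -/
noncomputable def alphaX {V : Type*} [Fintype V] (A : V → V → Prop) : ℝ := muSet (bigX A)

/-- `D = min_{x ∈ X} ρ(x)`. -/
noncomputable def Dmin {V : Type*} [Fintype V] (A : V → V → Prop) : ℝ :=
  sInf (rho A '' bigX A)

/-- `β = max_{y ∈ Y} ρ_Y(y)`. -/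
noncomputable def betaY {V : Type*} [Fintype V] (A : V → V → Prop) : ℝ :=
  sSup ((fun y => rhoIn A (bigY A) y) '' bigY A)

/-- `γ = min_{x ∈ X} ρ⁻_Y(x)`. -/
noncomputable def gammaX {V : Type*} [Fintype V] (A : V → V → Prop) : ℝ :=
  sInf ((fun x => rhoMIn A (bigY A) x) '' bigX A)

/-- `S = (m+1)·min_{v ∈ V(G)} s(v)`. -/
noncomputable def Smin (k l : ℕ) {V : Type*} [Fintype V] (A : V → V → Prop) : ℝ :=
  ((k : ℝ) + l + 1) * sInf (Set.range (sVert k l A))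

/-- `S₁ = min_{x ∈ X} (ρ⁺_Y(x))^k (ρ⁻_Y(x))^l`. -/
noncomputable def S1min (k l : ℕ) {V : Type*} [Fintype V] (A : V → V → Prop) : ℝ :=
  sInf ((fun x => rhoPIn A (bigY A) x ^ k * rhoMIn A (bigY A) x ^ l) '' bigX A)

/-- `S₂ = S₁ − ((m−1)/((m+1)·C(m,k)))·(α+β)(1−α)(1−D)^{m−2}`. -/
noncomputable def S2min (k l : ℕ) {V : Type*} [Fintype V] (A : V → V → Prop) : ℝ :=
  S1min k l A - (((k : ℝ) + l - 1) / (((k : ℝ) + l + 1) * (Nat.choose (k + l) k : ℝ)))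
    * (alphaX A + betaY A) * (1 - alphaX A) * (1 - Dmin A) ^ (k + l - 2)

/-- `λ₀ = k^k l^l / m^m`. -/
noncomputable def lam0 (k l : ℕ) : ℝ := (k : ℝ) ^ k * (l : ℝ) ^ l / ((k : ℝ) + l) ^ (k + l)

/-- `λ₁ = k^k l (l−1)^{l−1} / (m−1)^{m−1}` (with the convention `0⁰ = 1`). -/
noncomputable def lam1 (k l : ℕ) : ℝ :=
  (k : ℝ) ^ k * (l : ℝ) * ((l : ℝ) - 1) ^ (l - 1) / ((k : ℝ) + l - 1) ^ (k + l - 1)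

/-- The edge density `ρ(Z)` of a set of vertices `Z`: the number of unordered adjacent
pairs in `Z` divided by `C(|Z|,2)`. -/
noncomputable def densSet {V : Type*} [Fintype V] (A : V → V → Prop) (Z : Set V) : ℝ :=
  ((Nat.card {p : V × V // p.1 ∈ Z ∧ p.2 ∈ Z ∧ (A p.1 p.2 ∨ A p.2 p.1)} : ℝ) / 2) /
    (Nat.choose (Nat.card Z) 2 : ℝ)

/-- `d = 1 − (E_{x ∈ X} ρ⁻_Y(x))/(1−α)`. -/
noncomputable def dXY {V : Type*} [Fintype V] (A : V → V → Prop) : ℝ :=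
  1 - ((∑ᶠ x ∈ bigX A, rhoMIn A (bigY A) x) / (Nat.card (bigX A) : ℝ)) / (1 - alphaX A)

/-- `OPT(k,l)`. -/
noncomputable def OPT (k l : ℕ) : ℝ :=
  if k = l then
    (1 / 2 ^ (2 * k)) *
      sSup {y : ℝ | ∃ a ∈ Set.Icc (0 : ℝ) 1, y = a * (1 - a) ^ (2 * k) + (1 - a) * a ^ (2 * k)}
  else
    sSup {y : ℝ | ∃ a ∈ Set.Icc (0 : ℝ) (1 / 2),
      ∃ d ∈ Set.Icc (0 : ℝ) ((k : ℝ) / ((k : ℝ) + (l : ℝ))),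
      y = a * (1 - a) ^ (k + l) * d ^ k * (1 - d) ^ l
        + (((k : ℝ) - 1) ^ (k - 1) * (l : ℝ) ^ l / ((k : ℝ) + (l : ℝ) - 1) ^ (k + l - 1))
          * (1 - a) * a ^ (k + l) * (1 - d)}

/-!
In an oriented graph without triangles, a center together with any distinct out- and in-neighbours
spans an induced star. Blowing up such a graph with vertex weights `w` of total `1` therefore gives,
in the limit, star probability at least `∑ v, w v * out(v) ^ k * in(v) ^ l`, where `out(v)` and
`in(v)` are the total weights of the two neighbourhoods of `v`.

Take three parts of weights `α`, `β`, `γ`, all arcs going from the first part to the third, and a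
regular orientation between the first two in which a proportion `e` of the pairs points back to the
first. With `α = a` and `β * e = (1 - a) * (1 - d)`, the stars centered in the first part contribute
`a * (1 - a) ^ (k + l) * d ^ k * (1 - d) ^ l`, and those centered in the second part contribute most
when `e = (k - 1) / (k + l - 1)` maximizes `e ^ (k - 1) * (1 - e) ^ l`, which is the second term of
the objective. Since `β ≤ 1 - a`, this reaches only `1 - d ≤ e`. For smaller `d` we have
`d < 1 - e ≤ e`, and as `a ≤ 1 / 2` the objective is then no larger than at `d = e`.

For `k = l`, take `γ = 0` and `e = 1 / 2`.
-/

open Filter Topology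

/-- The value `y` is reached by `s(G)` for some finite oriented graph `G`, up to a larger value.
Irreflexivity of the arc relation is implied by its asymmetry. -/
def StarProbReaches (k l : ℕ) (y : ℝ) : Prop :=
  ∃ (n : ℕ) (A : Fin n → Fin n → Prop),
    (∀ u v, A u v → ¬ A v u) ∧ 1 ≤ n ∧ y ≤ starProb k l (Fin n) A

/-- An oriented graph whose underlying graph is triangle-free, stated as independence of all
neighbourhoods: in such a graph every choice of distinct out- and in-neighbours of a vertex spans
an induced star. -/
structure IsTriangleFreeOriented {V : Type*} (A : V → V → Prop) : Prop where
  asymm : ∀ u v, A u v → ¬ A v u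
  not_adj : ∀ x y z, (A x y ∨ A y x) → (A x z ∨ A z x) → ¬ A y z

/-- The blow-up of a digraph, with the vertex `v` replaced by `s v` pairwise nonadjacent copies. -/
def blowUp {V : Type*} (A : V → V → Prop) (s : V → ℕ) (p q : Σ v, Fin (s v)) : Prop :=
  A p.1 q.1

section Counting

variable {k l : ℕ} {V : Type*} {A : V → V → Prop}

theorem starProb_congr_equiv {W : Type*} [Fintype V] [Fintype W] (e : W ≃ V) :
    starProb k l W (fun u v => A (e u) (e v)) = starProb k l V A := by
  have h_card : Nat.card {φ : Fin (k + l + 1) → W // IsStarEmb k l (fun u v => A (e u) (e v)) φ} =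
      Nat.card {φ : Fin (k + l + 1) → V // IsStarEmb k l A φ} :=
    Nat.card_congr <| ((Equiv.refl _).arrowCongr e).subtypeEquiv fun φ =>
      and_congr_left' (e.comp_injective φ).symm
  rw [starProb, starProb, h_card, Fintype.card_congr e]

theorem StarProbReaches.of_le_starProb [Fintype V] [Nonempty V] (hA : ∀ u v, A u v → ¬ A v u)
    {y : ℝ} (hy : y ≤ starProb k l V A) : StarProbReaches k l y :=
  ⟨Fintype.card V, _, fun _ _ => hA _ _, Fintype.card_pos,
    hy.trans_eq (starProb_congr_equiv (Fintype.equivFin V).symm).symm⟩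

theorem IsTriangleFreeOriented.isStarEmb_cons_append (hA : IsTriangleFreeOriented A) {x : V}
    (f : Fin k ↪ {y // A x y}) (g : Fin l ↪ {y // A y x}) :
    IsStarEmb k l A (Fin.cons x (Fin.append (fun i => (f i : V)) fun i => (g i : V))) := by
  set leaf : Fin (k + l) → V := Fin.append (fun i => (f i : V)) fun i => (g i : V) with h_leaf
  have h_irrefl (v : V) : ¬ A v v := fun h => hA.asymm v v h h
  have h_out (i : Fin k) : A x (f i) := (f i).2
  have h_in (i : Fin l) : A (g i) x := (g i).2
  have h_not_in (i : Fin k) : ¬ A (f i) x := hA.asymm _ _ (h_out i)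
  have h_not_out (i : Fin l) : ¬ A x (g i) := hA.asymm _ _ (h_in i)
  have h_adj (i : Fin (k + l)) : A x (leaf i) ∨ A (leaf i) x := by
    induction i using Fin.addCases <;> simp [h_leaf, h_out, h_in]
  refine ⟨Fin.cons_injective_iff.2 ⟨?_, Fin.append_injective_iff.2
    ⟨Subtype.val_injective.comp f.injective, Subtype.val_injective.comp g.injective, ?_⟩⟩, ?_⟩
  · rintro ⟨i, hi⟩
    exact (h_adj i).elim (hi ▸ h_irrefl x) (hi ▸ h_irrefl x)
  · intro i j hij
    exact h_not_out j (hij ▸ h_out i)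
  · intro a b
    induction a using Fin.cases with
    | zero =>
      induction b using Fin.cases with
      | zero => simp [StarArc, h_irrefl]
      | succ b => induction b using Fin.addCases <;> simp [StarArc, h_leaf, h_out, h_not_out]
    | succ a =>
      induction b using Fin.cases with
      | zero => induction a using Fin.addCases <;> simp [StarArc, h_leaf, h_in, h_not_in]
      | succ b => simp [StarArc, hA.not_adj x _ _ (h_adj a) (h_adj b)]

theorem IsTriangleFreeOriented.sum_descFactorial_le_card_isStarEmb [Fintype V]
    (hA : IsTriangleFreeOriented A) :
    ∑ x, (Nat.card {y // A x y}).descFactorial k * (Nat.card {y // A y x}).descFactorial l ≤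
      Nat.card {φ : Fin (k + l + 1) → V // IsStarEmb k l A φ} := by
  classical
  have h_card (x : V) :
      (Nat.card {y // A x y}).descFactorial k * (Nat.card {y // A y x}).descFactorial l =
        Nat.card ((Fin k ↪ {y // A x y}) × (Fin l ↪ {y // A y x})) := by
    simp [Fintype.card_embedding_eq]
  simp only [h_card, ← Nat.card_sigma]
  refine Nat.card_le_card_of_injective
    (fun p => ⟨_, hA.isStarEmb_cons_append p.2.1 p.2.2⟩) ?_
  rintro ⟨x, f, g⟩ ⟨x', f', g'⟩ h
  obtain ⟨rfl, h_leaf⟩ := Fin.cons_inj (α := fun _ => V).1 (Subtype.ext_iff.1 h)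
  have h_f : f = f' := by
    ext i; simpa using congrFun h_leaf (Fin.castAdd l i)
  have h_g : g = g' := by
    ext i; simpa using congrFun h_leaf (Fin.natAdd k i)
  rw [h_f, h_g]

theorem isTriangleFreeOriented_blowUp (hA : IsTriangleFreeOriented A) (s : V → ℕ) :
    IsTriangleFreeOriented (blowUp A s) where
  asymm _ _ := hA.asymm _ _
  not_adj _ _ _ := hA.not_adj _ _ _

end Counting

section Weights

variable {k l : ℕ} {V : Type*} [Fintype V] {A : V → V → Prop}

open scoped Classical in
/-- The total weight of the out-neighbours of `v`. -/
noncomputable def outWeight {M : Type*} [AddCommMonoid M] (A : V → V → Prop) (w : V → M) (v : V) :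
    M :=
  ∑ u with A v u, w u

open scoped Classical in
/-- The total weight of the in-neighbours of `v`. -/
noncomputable def inWeight {M : Type*} [AddCommMonoid M] (A : V → V → Prop) (w : V → M) (v : V) :
    M :=
  ∑ u with A u v, w u

open scoped Classical in
theorem card_sigma_fin_subtype (s : V → ℕ) (P : V → Prop) :
    Nat.card {q : Σ v, Fin (s v) // P q.1} = ∑ v with P v, s v := by
  rw [Nat.card_eq_fintype_card, Fintype.card_subtype, ← Finset.univ_sigma_univ]
  have : (Finset.univ.sigma fun v => (Finset.univ : Finset (Fin (s v)))).filter (fun q => P q.1) =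
      (Finset.univ.filter P).sigma fun v => (Finset.univ : Finset (Fin (s v))) := by
    ext; simp
  rw [this, Finset.card_sigma]
  simp

theorem IsTriangleFreeOriented.sum_descFactorial_le_card_isStarEmb_blowUp
    (hA : IsTriangleFreeOriented A) (s : V → ℕ) :
    ∑ v, s v * ((outWeight A s v).descFactorial k * (inWeight A s v).descFactorial l) ≤
      Nat.card {φ : Fin (k + l + 1) → Σ v, Fin (s v) // IsStarEmb k l (blowUp A s) φ} := by
  have h_out (p : Σ v, Fin (s v)) :
      Nat.card {q // blowUp A s p q} = outWeight A s p.1 :=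
    card_sigma_fin_subtype s (A p.1)
  have h_in (p : Σ v, Fin (s v)) :
      Nat.card {q // blowUp A s q p} = inWeight A s p.1 :=
    card_sigma_fin_subtype s (A · p.1)
  refine le_of_eq_of_le ?_ (isTriangleFreeOriented_blowUp hA s).sum_descFactorial_le_card_isStarEmb
  simp [h_out, h_in, Fintype.sum_sigma]

/-- A uniformly random map into a large blow-up with vertex weights `w` sends the center to the
class of `v` with probability `w v`, and each leaf to a correct neighbour of `v` with probability
the weight of that neighbourhood. -/
noncomputable def starWeight (k l : ℕ) (A : V → V → Prop) (w : V → ℝ) : ℝ :=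
  ∑ v, w v * (outWeight A w v ^ k * inWeight A w v ^ l)

theorem tendsto_descFactorial_div_pow {u : ℕ → ℕ} {c : ℝ}
    (hu : Tendsto (fun N => (u N : ℝ) / N) atTop (𝓝 c)) (r : ℕ) :
    Tendsto (fun N => ((u N).descFactorial r : ℝ) / (N : ℝ) ^ r) atTop (𝓝 (c ^ r)) := by
  have h_factor (i : ℕ) : Tendsto (fun N => ((u N - i : ℕ) : ℝ) / N) atTop (𝓝 c) := by
    have h_lower : Tendsto (fun N : ℕ => (u N : ℝ) / N - i / N) atTop (𝓝 c) := by
      simpa using hu.sub (tendsto_const_div_atTop_nhds_zero_nat (i : ℝ))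
    refine tendsto_of_tendsto_of_tendsto_of_le_of_le h_lower hu (fun N => ?_) fun N => ?_
    · dsimp only
      rw [← sub_div]
      gcongr
      rw [sub_le_iff_le_add]
      exact_mod_cast Nat.sub_le_iff_le_add.1 le_rfl
    · dsimp only
      gcongr
      exact Nat.sub_le _ _
  simpa [Nat.descFactorial_eq_prod_range, Finset.prod_div_distrib] using
    tendsto_finsetProd (Finset.range r) fun i _ => h_factor i

theorem tendsto_starWeight_of_div {s : ℕ → V → ℕ} {w : V → ℝ}
    (hs : ∀ v, Tendsto (fun N => (s N v : ℝ) / N) atTop (𝓝 (w v))) :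
    Tendsto (fun N : ℕ => (∑ v, s N v * ((outWeight A (s N) v).descFactorial k *
        (inWeight A (s N) v).descFactorial l) : ℕ) / (N : ℝ) ^ (k + l + 1))
      atTop (𝓝 (starWeight k l A w)) := by
  classical
  have h_sum (P : V → Prop) : Tendsto (fun N => ((∑ u with P u, s N u : ℕ) : ℝ) / N) atTop
      (𝓝 (∑ u with P u, w u)) := by
    simpa [Finset.sum_div] using tendsto_finsetSum _ fun u _ => hs u
  have h_term (v : V) := (hs v).mul <|
    (tendsto_descFactorial_div_pow (h_sum (A v)) k).mul
      (tendsto_descFactorial_div_pow (h_sum (A · v)) l)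
  refine (tendsto_finsetSum Finset.univ fun v _ => h_term v).congr fun N => ?_
  push_cast
  rw [Finset.sum_div]
  refine Finset.sum_congr rfl fun v _ => ?_
  rw [pow_succ', pow_add, mul_div_mul_comm, mul_div_mul_comm]
  rfl

theorem IsTriangleFreeOriented.starProbReaches_of_lt_starWeight (hA : IsTriangleFreeOriented A)
    {w : V → ℝ} (hw : ∀ v, 0 ≤ w v) (hw_sum : ∑ v, w v = 1) {y : ℝ}
    (hy : y < starWeight k l A w) : StarProbReaches k l y := by
  let s (N : ℕ) (v : V) : ℕ := ⌊w v * N⌋₊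
  have hs (v : V) : Tendsto (fun N => (s N v : ℝ) / N) atTop (𝓝 (w v)) :=
    (tendsto_nat_floor_mul_div_atTop (hw v)).comp tendsto_natCast_atTop_atTop
  have h_card : Tendsto (fun N => ((∑ v, s N v : ℕ) : ℝ) / N) atTop (𝓝 1) := by
    simpa [Finset.sum_div, hw_sum] using tendsto_finsetSum Finset.univ fun v _ => hs v
  have h_lim := (tendsto_starWeight_of_div (k := k) (l := l) (A := A) hs).div
    (h_card.pow (k + l + 1)) (by simp)
  rw [one_pow, div_one] at h_lim
  obtain ⟨N, hN, hN_card⟩ := ((h_lim.eventually (lt_mem_nhds hy)).and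
    (h_card.eventually (lt_mem_nhds one_pos))).exists
  have hN0 : (N : ℝ) ≠ 0 := by rintro h; simp [h] at hN_card
  have h_card_pos : 0 < Fintype.card (Σ v, Fin (s N v)) := by
    rw [Fintype.card_sigma]
    simp only [Fintype.card_fin]
    exact Nat.pos_of_ne_zero fun h => by simp [h] at hN_card
  have : Nonempty (Σ v, Fin (s N v)) := Fintype.card_pos_iff.1 h_card_pos
  refine .of_le_starProb (isTriangleFreeOriented_blowUp hA (s N)).asymm (hN.le.trans ?_)
  simp only [Pi.div_apply]
  rw [div_pow, div_div_div_cancel_right₀ (pow_ne_zero _ hN0), starProb, Fintype.card_sigma]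
  simp only [Fintype.card_fin]
  gcongr
  exact hA.sum_descFactorial_le_card_isStarEmb_blowUp (s N)

end Weights

section Density

variable {G : Type*} [Fintype G]

theorem sum_ite_mem_div_card (S : Finset G) {f : G → G} (hf : f.Bijective)
    {_ : DecidablePred fun j => f j ∈ S} (c : ℝ) :
    ∑ j, (if f j ∈ S then c / Fintype.card G else 0) = c * S.dens := by
  have h_card : (Finset.univ.filter fun j => f j ∈ S).card = S.card :=
    Finset.card_bijective f hf (by simp)
  rw [← Finset.sum_filter, Finset.sum_const, h_card, nsmul_eq_mul, Finset.nnratCast_dens]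
  ring

theorem sum_ite_notMem_div_card [Nonempty G] (S : Finset G) {f : G → G} (hf : f.Bijective)
    {_ : DecidablePred fun j => f j ∈ S} (c : ℝ) :
    ∑ j, (if f j ∈ S then 0 else c / Fintype.card G) = c * (1 - S.dens) := by
  have h_split (j : G) : (if f j ∈ S then 0 else c / Fintype.card G) =
      c / Fintype.card G - if f j ∈ S then c / Fintype.card G else 0 := by
    split_ifs <;> simp
  simp only [h_split, Finset.sum_sub_distrib, sum_ite_mem_div_card S hf, Finset.sum_const,
    Finset.card_univ, nsmul_eq_mul]
  field_simp

end Density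

section Construction

variable {k l : ℕ} {G : Type*} [AddGroup G]

/-- The pattern of the extremal construction: the first two parts are copies of `G`, with an arc
between any `i` in the first and `j` in the second, pointing to the first part iff `i + j ∈ S`;
the last part is a single out-neighbour of the whole first part. Using the sum `i + j` makes both
parts see the same proportion `|S| / |G|` of each orientation. It is reducible so that `simp` can
match the decidability instances of the conditions it unfolds to. -/
abbrev sumArc (S : Finset G) : G ⊕ G ⊕ Unit → G ⊕ G ⊕ Unit → Prop
  | .inl i, .inr (.inl j) => i + j ∉ S
  | .inr (.inl j), .inl i => i + j ∈ S
  | .inl _, .inr (.inr _) => True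
  | _, _ => False

theorem isTriangleFreeOriented_sumArc (S : Finset G) : IsTriangleFreeOriented (sumArc S) where
  asymm := by
    rintro (i | j | _) (i' | j' | _) <;> simp [sumArc]
  not_adj := by
    rintro (i | j | _) (i' | j' | _) (i'' | j'' | _) <;> simp [sumArc]

variable [Fintype G]

/-- The vertex weights giving the three parts of `sumArc` total weights `α`, `β` and `γ`. -/
noncomputable def partWeight (α β γ : ℝ) : G ⊕ G ⊕ Unit → ℝ :=
  Sum.elim (fun _ => α / Fintype.card G) (Sum.elim (fun _ => β / Fintype.card G) fun _ => γ)

variable (S : Finset G) (α β γ : ℝ)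

theorem outWeight_sumArc_inl (i : G) :
    outWeight (sumArc S) (partWeight α β γ) (.inl i) = β * (1 - S.dens) + γ := by
  rw [outWeight, Finset.sum_filter, Fintype.sum_sum_type, Fintype.sum_sum_type]
  simp [sumArc, partWeight, sum_ite_notMem_div_card S (AddGroup.addLeft_bijective i)]

theorem inWeight_sumArc_inl (i : G) :
    inWeight (sumArc S) (partWeight α β γ) (.inl i) = β * S.dens := by
  rw [inWeight, Finset.sum_filter, Fintype.sum_sum_type, Fintype.sum_sum_type]
  simp [sumArc, partWeight, sum_ite_mem_div_card S (AddGroup.addLeft_bijective i)]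

theorem outWeight_sumArc_inr_inl (j : G) :
    outWeight (sumArc S) (partWeight α β γ) (.inr (.inl j)) = α * S.dens := by
  rw [outWeight, Finset.sum_filter, Fintype.sum_sum_type, Fintype.sum_sum_type]
  simp [sumArc, partWeight, sum_ite_mem_div_card S (AddGroup.addRight_bijective j)]

theorem inWeight_sumArc_inr_inl (j : G) :
    inWeight (sumArc S) (partWeight α β γ) (.inr (.inl j)) = α * (1 - S.dens) := by
  rw [inWeight, Finset.sum_filter, Fintype.sum_sum_type, Fintype.sum_sum_type]
  simp [sumArc, partWeight, sum_ite_notMem_div_card S (AddGroup.addRight_bijective j)]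

theorem outWeight_sumArc_inr_inr (u : Unit) :
    outWeight (sumArc S) (partWeight α β γ) (.inr (.inr u)) = 0 := by
  rw [outWeight, Finset.sum_filter]
  simp [sumArc]

theorem sum_partWeight : ∑ v : G ⊕ G ⊕ Unit, partWeight α β γ v = α + β + γ := by
  simp only [partWeight, Fintype.sum_sum_type, Sum.elim_inl, Sum.elim_inr, Finset.sum_const,
    Finset.card_univ, nsmul_eq_mul, Fintype.card_unit]
  field_simp
  ring

theorem starWeight_sumArc (hk : k ≠ 0) :
    starWeight k l (sumArc S) (partWeight α β γ) =
      α * ((β * (1 - S.dens) + γ) ^ k * (β * S.dens) ^ l) +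
        β * ((α * S.dens) ^ k * (α * (1 - S.dens)) ^ l) := by
  simp only [starWeight, Fintype.sum_sum_type, outWeight_sumArc_inl, inWeight_sumArc_inl,
    outWeight_sumArc_inr_inl, inWeight_sumArc_inr_inl, outWeight_sumArc_inr_inr,
    zero_pow hk]
  simp only [partWeight, Sum.elim_inl, Sum.elim_inr, Finset.sum_const, Finset.card_univ,
    nsmul_eq_mul, zero_mul, mul_zero, add_zero]
  field_simp

end Construction

theorem exists_finset_zmod_dens_eq {e : ℚ≥0} (he : e ≤ 1) :
    ∃ (n : ℕ) (_ : NeZero n) (S : Finset (ZMod n)), S.dens = e := by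
  have : NeZero e.den := ⟨e.den_ne_zero⟩
  have h_num : e.num ≤ (Finset.univ : Finset (ZMod e.den)).card := by
    rw [Finset.card_univ, ZMod.card]
    rw [← NNRat.num_div_den e, div_le_one (by positivity)] at he
    exact_mod_cast he
  obtain ⟨S, -, hS⟩ := Finset.exists_subset_card_eq h_num
  exact ⟨e.den, this, S, by rw [Finset.dens, hS, ZMod.card, NNRat.num_div_den]⟩

theorem starProbReaches_of_lt_three_part_weight {k l : ℕ} (hk : k ≠ 0) {e : ℚ≥0} (he : e ≤ 1)
    {α β γ : ℝ} (hα : 0 ≤ α) (hβ : 0 ≤ β) (hγ : 0 ≤ γ) (h_sum : α + β + γ = 1) {y : ℝ}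
    (hy : y < α * ((β * (1 - e) + γ) ^ k * (β * e) ^ l) +
      β * ((α * e) ^ k * (α * (1 - e)) ^ l)) : StarProbReaches k l y := by
  obtain ⟨n, _, S, rfl⟩ := exists_finset_zmod_dens_eq he
  refine (isTriangleFreeOriented_sumArc S).starProbReaches_of_lt_starWeight
    (w := partWeight α β γ) ?_ ?_ ?_
  · rintro (_ | _ | _) <;> simp only [partWeight, Sum.elim_inl, Sum.elim_inr] <;> positivity
  · rw [sum_partWeight, h_sum]
  · rwa [starWeight_sumArc S α β γ hk]

section Optimization

theorem pow_le_div_pow_mul_exp {x t : ℝ} (hx : 0 ≤ x) (ht : 0 < t) (n : ℕ) :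
    x ^ n ≤ (n / t) ^ n * Real.exp (t * x - n) := by
  rcases eq_or_ne n 0 with rfl | hn
  · simpa using mul_nonneg ht.le hx
  · have : (0 : ℝ) < n := by positivity
    calc x ^ n = (n / t) ^ n * ((t * x / n - 1) + 1) ^ n := by
          rw [← mul_pow]; congr 1; field_simp; ring
      _ ≤ (n / t) ^ n * Real.exp (t * x / n - 1) ^ n := by
          gcongr
          · rw [sub_add_cancel]; positivity
          · exact Real.add_one_le_exp _
      _ = (n / t) ^ n * Real.exp (t * x - n) := by
          rw [← Real.exp_nat_mul]; congr 2; field_simp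

theorem pow_mul_one_sub_pow_le {x : ℝ} (hx0 : 0 ≤ x) (hx1 : x ≤ 1) (m n : ℕ) :
    x ^ m * (1 - x) ^ n ≤ (m / (m + n)) ^ m * (n / (m + n)) ^ n := by
  rcases (add_nonneg m.cast_nonneg n.cast_nonneg : (0 : ℝ) ≤ m + n).eq_or_lt' with h | ht
  · obtain ⟨rfl, rfl⟩ : m = 0 ∧ n = 0 := by norm_cast at h; omega
    simp
  · calc x ^ m * (1 - x) ^ n
        ≤ ((m / (m + n)) ^ m * Real.exp ((m + n) * x - m)) *
            ((n / (m + n)) ^ n * Real.exp ((m + n) * (1 - x) - n)) :=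
          mul_le_mul (pow_le_div_pow_mul_exp hx0 ht m)
            (pow_le_div_pow_mul_exp (sub_nonneg.2 hx1) ht n) (by positivity) (by positivity)
      _ = (m / (m + n)) ^ m * (n / (m + n)) ^ n *
            Real.exp (((m + n) * x - m) + ((m + n) * (1 - x) - n)) := by
          rw [Real.exp_add]; ring
      _ = (m / (m + n)) ^ m * (n / (m + n)) ^ n := by
          rw [show (m + n) * x - m + ((m + n) * (1 - x) - n) = 0 by ring, Real.exp_zero, mul_one]

/-- The function of `(α, d)` maximized in `OPT k l` when `l < k`. -/
noncomputable def starObjective (k l : ℕ) (a d : ℝ) : ℝ :=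
  a * (1 - a) ^ (k + l) * d ^ k * (1 - d) ^ l
    + (((k : ℝ) - 1) ^ (k - 1) * (l : ℝ) ^ l / ((k : ℝ) + (l : ℝ) - 1) ^ (k + l - 1))
      * (1 - a) * a ^ (k + l) * (1 - d)

/-- The maximizer `(k - 1) / (k + l - 1)` of `x ^ (k - 1) * (1 - x) ^ l`: the proportion of
backward arcs between the first two parts of the construction that is best for the stars centered
in the second part. -/
noncomputable def backRatio (k l : ℕ) : ℚ≥0 := (k - 1 : ℕ) / ((k - 1 : ℕ) + l)

variable {k l : ℕ}

theorem backRatio_le_one (k l : ℕ) : backRatio k l ≤ 1 :=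
  div_le_one_of_le₀ le_self_add zero_le

theorem coe_backRatio (k l : ℕ) : (backRatio k l : ℝ) = (k - 1 : ℕ) / ((k - 1 : ℕ) + l) := by
  simp only [backRatio, NNRat.cast_div, NNRat.cast_add, NNRat.cast_natCast]

theorem one_sub_backRatio (hl : 1 ≤ l) : 1 - (backRatio k l : ℝ) = l / ((k - 1 : ℕ) + l) := by
  have : (0 : ℝ) < l := by positivity
  rw [coe_backRatio]
  field_simp
  ring

theorem one_sub_backRatio_le_backRatio (hl : 1 ≤ l) (hlk : l < k) :
    1 - (backRatio k l : ℝ) ≤ backRatio k l := by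
  rw [one_sub_backRatio hl, coe_backRatio]
  gcongr
  omega

theorem starObjective_eq (hk : 1 ≤ k) (hl : 1 ≤ l) (a d : ℝ) :
    starObjective k l a d = a * (1 - a) ^ (k + l) * (d * (d ^ (k - 1) * (1 - d) ^ l)) +
      backRatio k l ^ (k - 1) * (1 - backRatio k l) ^ l * ((1 - a) * a ^ (k + l)) * (1 - d) := by
  obtain ⟨k, rfl⟩ := Nat.exists_eq_add_of_le' hk
  rw [one_sub_backRatio hl, starObjective, coe_backRatio, show k + 1 + l - 1 = k + l by omega]
  push_cast
  rw [show (k : ℝ) + 1 + l - 1 = k + l by ring]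
  simp only [add_tsub_cancel_right, div_pow, pow_add]
  ring

theorem starObjective_le_backRatio (hk : 1 ≤ k) (hl : 1 ≤ l) {a d : ℝ} (ha0 : 0 ≤ a)
    (ha : a ≤ 1 / 2) (hd0 : 0 ≤ d) (hd : d ≤ backRatio k l) :
    starObjective k l a d ≤ starObjective k l a (backRatio k l) := by
  have he : (backRatio k l : ℝ) ≤ 1 := mod_cast backRatio_le_one k l
  have h_max : d ^ (k - 1) * (1 - d) ^ l ≤ backRatio k l ^ (k - 1) * (1 - backRatio k l) ^ l := by
    rw [one_sub_backRatio hl, coe_backRatio]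
    exact pow_mul_one_sub_pow_le hd0 (hd.trans he) (k - 1) l
  have h_swap : (1 - a) * a ^ (k + l) ≤ a * (1 - a) ^ (k + l) := by
    have h_pow : a ^ (k + l - 1) ≤ (1 - a) ^ (k + l - 1) := by gcongr; linarith
    have h_nonneg : 0 ≤ a * (1 - a) := mul_nonneg ha0 (by linarith)
    have hkl : k + l ≠ 0 := by omega
    rw [← mul_pow_sub_one hkl a, ← mul_pow_sub_one hkl (1 - a)]
    linarith [mul_le_mul_of_nonneg_left h_pow h_nonneg]
  rw [starObjective_eq hk hl, starObjective_eq hk hl]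
  generalize (backRatio k l : ℝ) = e at *
  set L := e ^ (k - 1) * (1 - e) ^ l
  have hL : 0 ≤ L := mul_nonneg (pow_nonneg (hd0.trans hd) _) (pow_nonneg (sub_nonneg.2 he) _)
  have h_first_nonneg : 0 ≤ a * (1 - a) ^ (k + l) := mul_nonneg ha0 (pow_nonneg (by linarith) _)
  calc a * (1 - a) ^ (k + l) * (d * (d ^ (k - 1) * (1 - d) ^ l)) +
        L * ((1 - a) * a ^ (k + l)) * (1 - d)
      ≤ a * (1 - a) ^ (k + l) * (d * L) + L * ((1 - a) * a ^ (k + l)) * (1 - d) := by gcongr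
    _ ≤ a * (1 - a) ^ (k + l) * (e * L) + L * ((1 - a) * a ^ (k + l)) * (1 - e) := by
        linarith [mul_nonneg (mul_nonneg hL (sub_nonneg.2 h_swap)) (sub_nonneg.2 hd)]

end Optimization

section Attainment

variable {k l : ℕ} {a d y : ℝ}

theorem starProbReaches_of_lt_starObjective_of_one_sub_le (hk : 2 ≤ k) (hl : 1 ≤ l) (ha0 : 0 ≤ a)
    (ha1 : a ≤ 1) (hd : 1 - d ≤ backRatio k l) (hd1 : d ≤ 1) (hy : y < starObjective k l a d) :
    StarProbReaches k l y := by
  have he : 0 < (backRatio k l : ℝ) := by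
    have : 0 < k - 1 := by omega
    rw [backRatio]; positivity
  rw [starObjective_eq (by omega) hl] at hy
  set p : ℝ := (1 - d) / backRatio k l
  have hpe : p * backRatio k l = 1 - d := div_mul_cancel₀ _ he.ne'
  have hp0 : 0 ≤ p := div_nonneg (sub_nonneg.2 hd1) he.le
  have hp1 : p ≤ 1 := div_le_one_of_le₀ hd he.le
  refine starProbReaches_of_lt_three_part_weight (by omega) (backRatio_le_one k l)
    (α := a) (β := (1 - a) * p) (γ := (1 - a) * (1 - p)) ha0 (mul_nonneg (sub_nonneg.2 ha1) hp0)
    (mul_nonneg (sub_nonneg.2 ha1) (sub_nonneg.2 hp1)) (by ring) (hy.trans_eq ?_)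
  have h_out : (1 - a) * p * (1 - backRatio k l) + (1 - a) * (1 - p) = (1 - a) * d := by
    linear_combination -(1 - a) * hpe
  have h_in : (1 - a) * p * backRatio k l = (1 - a) * (1 - d) := by
    linear_combination (1 - a) * hpe
  rw [h_out, h_in, ← hpe]
  obtain ⟨k, rfl⟩ := Nat.exists_eq_add_of_le' (by omega : 1 ≤ k)
  simp only [add_tsub_cancel_right, mul_pow, pow_add, pow_one]
  ring

theorem starProbReaches_of_lt_starObjective (hl : 1 ≤ l) (hlk : l < k) (ha0 : 0 ≤ a)
    (ha : a ≤ 1 / 2) (hd0 : 0 ≤ d) (hd1 : d ≤ 1) (hy : y < starObjective k l a d) :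
    StarProbReaches k l y := by
  rcases le_total (1 - d) (backRatio k l) with hd | hd
  · exact starProbReaches_of_lt_starObjective_of_one_sub_le (by omega) hl ha0 (by linarith) hd
      hd1 hy
  · have h_half := one_sub_backRatio_le_backRatio hl hlk
    have he : (backRatio k l : ℝ) ≤ 1 := mod_cast backRatio_le_one k l
    exact starProbReaches_of_lt_starObjective_of_one_sub_le (by omega) hl ha0 (by linarith)
      h_half he (hy.trans_le (starObjective_le_backRatio (by omega) hl ha0 ha hd0 (by linarith)))

theorem starProbReaches_self_of_lt (hk : k ≠ 0) (ha0 : 0 ≤ a) (ha1 : a ≤ 1)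
    (hy : y < 1 / 2 ^ (2 * k) * (a * (1 - a) ^ (2 * k) + (1 - a) * a ^ (2 * k))) :
    StarProbReaches k k y := by
  have h_half : (1 / 2 : ℚ≥0) ≤ 1 := by norm_num
  refine starProbReaches_of_lt_three_part_weight hk h_half (γ := 0) ha0 (sub_nonneg.2 ha1) le_rfl
    (by ring) (hy.trans_eq ?_)
  simp only [NNRat.cast_div, NNRat.cast_one, NNRat.cast_ofNat, sub_half, add_zero, mul_pow,
    two_mul, pow_add, div_pow, one_pow]
  field_simp

theorem starProbReaches_of_lt_OPT (hl : 1 ≤ l) (hlk : l ≤ k) (hy : y < OPT k l) :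
    StarProbReaches k l y := by
  rw [OPT] at hy
  split_ifs at hy with hkl
  · subst hkl
    rw [← div_lt_iff₀' (by positivity)] at hy
    obtain ⟨_, ⟨a, ha, rfl⟩, hy'⟩ := exists_lt_of_lt_csSup (by exact ⟨_, 0, by simp, rfl⟩) hy
    exact starProbReaches_self_of_lt (by omega) ha.1 ha.2 ((div_lt_iff₀' (by positivity)).1 hy')
  · obtain ⟨_, ⟨a, ha, d, hd, rfl⟩, hy'⟩ := exists_lt_of_lt_csSup
      (by exact ⟨_, 0, by simp, 0, ⟨le_rfl, by positivity⟩, rfl⟩) hy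
    have hd1 : d ≤ 1 := hd.2.trans (div_le_one_of_le₀ (by simp) (by positivity))
    exact starProbReaches_of_lt_starObjective hl (by omega) ha.1 ha.2 hd.1 hd1 hy'

end Attainment

theorem stmt2 (k l : ℕ) (hl : 1 ≤ l) (hlk : l ≤ k) :
    ∀ ε : ℝ, 0 < ε → ∃ (n : ℕ) (A : Fin n → Fin n → Prop), Irreflexive A ∧
      (∀ u v, A u v → ¬ A v u) ∧ 1 ≤ n ∧ OPT k l - ε ≤ starProb k l (Fin n) A := by
  intro ε hε
  obtain ⟨n, A, h_asymm, hn, h_starProb⟩ :=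
    starProbReaches_of_lt_OPT hl hlk (sub_lt_self (OPT k l) hε)
  exact ⟨n, A, fun u h => h_asymm u u h h, h_asymm, hn, h_starProb⟩
end

section
/- Let k ≥ l ≥ 1 be integers with k + l ≥ 6 and m = k + l. Then the function f is non-decreasing on [0,1], concave on [0,1], and satisfies f(x) ≥ x^k (1−x)^l for all x ∈ [0,1]. -/
open scoped BigOperators

/-- The piecewise function `f` from the paper. -/
noncomputable def fFun (k l : ℕ) (x : ℝ) : ℝ :=
  if x ≤ ((k : ℝ) - 1) / ((k : ℝ) + l - 1) then
    (((k : ℝ) - 1) ^ (k - 1) * (l : ℝ) ^ l / ((k : ℝ) + l - 1) ^ (k + l - 1)) * x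
  else if x ≤ (k : ℝ) / ((k : ℝ) + l) then
    x ^ k * (1 - x) ^ l
  else
    (k : ℝ) ^ k * (l : ℝ) ^ l / ((k : ℝ) + l) ^ (k + l)

/-!
Write `g x = x ^ k * (1 - x) ^ l`, `p = (k - 1) / (m - 1)` and `q = k / m`. The tangent line of `g`
at `p` passes through the origin and has slope `p ^ (k - 1) * (1 - p) ^ l`, while the tangent line
at `q` is horizontal. So `f` extends `g` from `[p, q]` by its tangent lines, and it is
differentiable with `f' x = g' (max p (min q x))`. Since `g'` is decreasing on `[p, q]` and vanishes
at `q`, `f` is concave and non-decreasing. The inequality `g ≤ f` to the right of `q` says that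
`q` is the mode of `g`; to the left of `p`, after division by `x`, it says that `p` is the mode of
`x ^ (k - 1) * (1 - x) ^ l`.
-/

open Set

section TangentExtension

lemma hasDerivAt_ite_le {E : Type*} [NormedAddCommGroup E] [NormedSpace ℝ E] {u v : ℝ → E}
    {f' : E} {a x : ℝ} (hu : x ≤ a → HasDerivWithinAt u f' (Iic a) x)
    (hv : a ≤ x → HasDerivWithinAt v f' (Ici a) x) (h : u a = v a) :
    HasDerivAt (fun y => if y ≤ a then u y else v y) f' x := by
  have left : x ≤ a → HasDerivWithinAt (fun y => if y ≤ a then u y else v y) f' (Iic a) x :=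
    fun hx => (hu hx).congr (fun y hy => if_pos hy) (if_pos hx)
  have eq_right : ∀ y ∈ Ici a, (if y ≤ a then u y else v y) = v y := by
    intro y hy
    split_ifs with hya
    · rw [le_antisymm hya hy, h]
    · rfl
  have right : a ≤ x → HasDerivWithinAt (fun y => if y ≤ a then u y else v y) f' (Ici a) x :=
    fun hx => (hv hx).congr eq_right (eq_right x hx)
  rcases lt_trichotomy x a with hx | rfl | hx
  · exact (left hx.le).hasDerivAt (Iic_mem_nhds hx)
  · simpa only [Iic_union_Ici, hasDerivWithinAt_univ] using (left le_rfl).union (right le_rfl)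
  · exact (right hx.le).hasDerivAt (Ici_mem_nhds hx)

/-- The function that agrees with `g` on `[a, b]` and continues along the tangent lines of `g`
at `a` and `b`. It extends a concave `g` on `[a, b]` to a concave function on `ℝ`. -/
noncomputable def tangentExtension (g : ℝ → ℝ) (a b x : ℝ) : ℝ :=
  if x ≤ a then g a + deriv g a * (x - a)
  else if x ≤ b then g x
  else g b + deriv g b * (x - b)

variable {g : ℝ → ℝ} {a b : ℝ}

lemma hasDerivAt_tangentExtension (hab : a ≤ b) (hg : ∀ x ∈ Icc a b, DifferentiableAt ℝ g x)
    (x : ℝ) : HasDerivAt (tangentExtension g a b) (deriv g (max a (min b x))) x := by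
  have tangent (c : ℝ) : HasDerivAt (fun y => g c + deriv g c * (y - c)) (deriv g c) x := by
    simpa using (((hasDerivAt_id x).sub_const c).const_mul (deriv g c)).const_add (g c)
  refine hasDerivAt_ite_le (fun hxa => ?_) (fun hax => ?_) (by simp [hab])
  · rw [min_eq_right (hxa.trans hab), max_eq_left hxa]
    exact (tangent a).hasDerivWithinAt
  · refine (hasDerivAt_ite_le (fun hxb => ?_) (fun hbx => ?_) (by simp)).hasDerivWithinAt
    · rw [min_eq_right hxb, max_eq_right hax]
      exact (hg x ⟨hax, hxb⟩).hasDerivAt.hasDerivWithinAt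
    · rw [min_eq_left hbx, max_eq_right hab]
      exact (tangent b).hasDerivWithinAt

lemma deriv_tangentExtension (hab : a ≤ b) (hg : ∀ x ∈ Icc a b, DifferentiableAt ℝ g x) :
    deriv (tangentExtension g a b) = fun x => deriv g (max a (min b x)) :=
  funext fun x => (hasDerivAt_tangentExtension hab hg x).deriv

lemma differentiable_tangentExtension (hab : a ≤ b)
    (hg : ∀ x ∈ Icc a b, DifferentiableAt ℝ g x) : Differentiable ℝ (tangentExtension g a b) :=
  fun x => (hasDerivAt_tangentExtension hab hg x).differentiableAt

lemma concaveOn_univ_tangentExtension (hab : a ≤ b)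
    (hg : ∀ x ∈ Icc a b, DifferentiableAt ℝ g x) (hg' : AntitoneOn (deriv g) (Icc a b)) :
    ConcaveOn ℝ univ (tangentExtension g a b) := by
  refine Antitone.concaveOn_univ_of_deriv (differentiable_tangentExtension hab hg) ?_
  rw [deriv_tangentExtension hab hg]
  intro x y hxy
  exact hg' ⟨le_max_left _ _, max_le hab (min_le_left _ _)⟩
    ⟨le_max_left _ _, max_le hab (min_le_left _ _)⟩ (by gcongr)

lemma monotone_tangentExtension (hab : a ≤ b) (hg : ∀ x ∈ Icc a b, DifferentiableAt ℝ g x)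
    (hg' : ∀ x ∈ Icc a b, 0 ≤ deriv g x) : Monotone (tangentExtension g a b) := by
  refine monotone_of_deriv_nonneg (differentiable_tangentExtension hab hg) fun x => ?_
  rw [deriv_tangentExtension hab hg]
  exact hg' _ ⟨le_max_left _ _, max_le hab (min_le_left _ _)⟩

end TangentExtension

section PowBounds

lemma pow_le_pow_mul_exp (n : ℕ) {x : ℝ} (hx : 0 ≤ x) :
    x ^ n ≤ (n : ℝ) ^ n * Real.exp (x - n) := by
  rcases Nat.eq_zero_or_pos n with rfl | hn
  · simpa using Real.one_le_exp hx
  · have hn' : (0 : ℝ) < n := by exact_mod_cast hn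
    have tangent : x / n ≤ Real.exp (x / n - 1) := by
      linarith [Real.add_one_le_exp (x / n - 1)]
    calc x ^ n = (n : ℝ) ^ n * (x / n) ^ n := by rw [← mul_pow, mul_div_cancel₀ x hn'.ne']
      _ ≤ (n : ℝ) ^ n * Real.exp (x / n - 1) ^ n := by gcongr
      _ = (n : ℝ) ^ n * Real.exp (x - n) := by
        rw [← Real.exp_nat_mul, mul_sub, mul_div_cancel₀ x hn'.ne', mul_one]

lemma antitoneOn_pow_mul_sub (n : ℕ) {a : ℝ} (ha : 0 ≤ a) :
    AntitoneOn (fun x : ℝ => x ^ n * (a - x)) (Ici (n * a / (n + 1))) := by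
  have hderiv (x : ℝ) : HasDerivAt (fun x : ℝ => x ^ n * (a - x))
      (n * x ^ (n - 1) * (a - x) + x ^ n * -1) x :=
    (hasDerivAt_pow n x).mul ((hasDerivAt_id x).const_sub a)
  refine antitoneOn_of_deriv_nonpos (convex_Ici _) (by fun_prop) (by fun_prop) fun x hx => ?_
  have hx : n * a / (n + 1) ≤ x := interior_subset hx
  have hx0 : 0 ≤ x := le_trans (by positivity) hx
  rw [(hderiv x).deriv]
  cases n with
  | zero => simp
  | succ n =>
    rw [div_le_iff₀ (by positivity)] at hx
    calc ((n + 1 : ℕ) : ℝ) * x ^ (n + 1 - 1) * (a - x) + x ^ (n + 1) * -1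
        = x ^ n * ((n + 1 : ℕ) * a - x * ((n + 1 : ℕ) + 1)) := by
          rw [Nat.add_sub_cancel]
          ring
      _ ≤ 0 := mul_nonpos_of_nonneg_of_nonpos (by positivity) (by linarith)

end PowBounds

section BetaKernel

/-- The Beta density with parameters `k + 1` and `l + 1`, without its normalising constant; the
middle piece of `fFun k l` is `betaKernel k l`. -/
def betaKernel (k l : ℕ) (x : ℝ) : ℝ := x ^ k * (1 - x) ^ l

/-- The mode of the Beta density, where `betaKernel k l` is maximal on `[0, 1]`; the breakpoints of
`fFun k l` are `betaMode (k - 1) l` and `betaMode k l`. For `k = l = 0` it is `0 / 0 = 0`. -/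
noncomputable def betaMode (k l : ℕ) : ℝ := k / (k + l)

lemma betaMode_nonneg (k l : ℕ) : 0 ≤ betaMode k l := by
  unfold betaMode
  positivity

lemma betaMode_le_one (k l : ℕ) : betaMode k l ≤ 1 :=
  div_le_one_of_le₀ (le_add_of_nonneg_right l.cast_nonneg) (by positivity)

lemma betaMode_le_betaMode_succ_left (k l : ℕ) : betaMode k l ≤ betaMode (k + 1) l := by
  rcases Nat.eq_zero_or_pos (k + l) with h | h
  · obtain ⟨rfl, rfl⟩ : k = 0 ∧ l = 0 := by omega
    simp [betaMode]
  · have : (0 : ℝ) < k + l := by exact_mod_cast h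
    unfold betaMode
    rw [div_le_div_iff₀ this (by positivity)]
    push_cast
    linarith [l.cast_nonneg (α := ℝ)]

lemma betaKernel_succ_left (k l : ℕ) (x : ℝ) : betaKernel (k + 1) l x = betaKernel k l x * x := by
  unfold betaKernel
  ring

lemma betaKernel_betaMode (k l : ℕ) :
    betaKernel k l (betaMode k l) = (k : ℝ) ^ k * (l : ℝ) ^ l / ((k : ℝ) + l) ^ (k + l) := by
  rcases Nat.eq_zero_or_pos (k + l) with h | h
  · obtain ⟨rfl, rfl⟩ : k = 0 ∧ l = 0 := by omega
    simp [betaKernel]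
  · have hkl : (k : ℝ) + l ≠ 0 := by exact_mod_cast h.ne'
    have one_sub : 1 - (k : ℝ) / (k + l) = l / (k + l) := by field_simp; ring
    rw [betaKernel, betaMode, one_sub, div_pow, div_pow, div_mul_div_comm, pow_add]

lemma pow_mul_betaKernel_le (k l : ℕ) {x : ℝ} (hx : x ∈ Icc (0 : ℝ) 1) :
    ((k : ℝ) + l) ^ (k + l) * betaKernel k l x ≤ (k : ℝ) ^ k * (l : ℝ) ^ l := by
  have hx' : 0 ≤ 1 - x := sub_nonneg.2 hx.2
  have hx0 := hx.1
  calc ((k : ℝ) + l) ^ (k + l) * betaKernel k l x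
      = ((k + l) * x) ^ k * ((k + l) * (1 - x)) ^ l := by
        rw [betaKernel, mul_pow, mul_pow, pow_add]
        ring
    _ ≤ ((k : ℝ) ^ k * Real.exp ((k + l) * x - k)) *
          ((l : ℝ) ^ l * Real.exp ((k + l) * (1 - x) - l)) := by
        gcongr
        · exact pow_le_pow_mul_exp k (by positivity)
        · exact pow_le_pow_mul_exp l (by positivity)
    _ = (k : ℝ) ^ k * (l : ℝ) ^ l := by
        rw [mul_mul_mul_comm, ← Real.exp_add,
          show ((k : ℝ) + l) * x - k + ((k + l) * (1 - x) - l) = 0 by ring, Real.exp_zero, mul_one]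

lemma betaKernel_le_betaKernel_betaMode (k l : ℕ) {x : ℝ} (hx : x ∈ Icc (0 : ℝ) 1) :
    betaKernel k l x ≤ betaKernel k l (betaMode k l) := by
  rcases Nat.eq_zero_or_pos (k + l) with h | h
  · obtain ⟨rfl, rfl⟩ : k = 0 ∧ l = 0 := by omega
    simp [betaKernel]
  · have hkl : (0 : ℝ) < k + l := by exact_mod_cast h
    rw [betaKernel_betaMode, le_div_iff₀' (by positivity)]
    exact pow_mul_betaKernel_le k l hx

lemma hasDerivAt_betaKernel (k l : ℕ) (x : ℝ) :
    HasDerivAt (betaKernel (k + 1) (l + 1))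
      ((k + l + 2) * (betaKernel k l x * (betaMode (k + 1) (l + 1) - x))) x := by
  have hkl : (k : ℝ) + 1 + (l + 1) ≠ 0 := by positivity
  refine ((hasDerivAt_pow (k + 1) x).mul
    (((hasDerivAt_id x).const_sub 1).pow (l + 1))).congr_deriv ?_
  simp only [betaKernel, betaMode, id, Pi.pow_apply, Nat.add_sub_cancel]
  push_cast
  field_simp
  ring

lemma deriv_betaKernel (k l : ℕ) (x : ℝ) : deriv (betaKernel (k + 1) (l + 1)) x =
    (k + l + 2) * (betaKernel k l x * (betaMode (k + 1) (l + 1) - x)) :=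
  (hasDerivAt_betaKernel k l x).deriv

-- As `betaKernel (k + 1) l x = betaKernel k l x * x`, this says that the tangent line at
-- `betaMode k (l + 1)` passes through the origin.
lemma deriv_betaKernel_betaMode_left (k l : ℕ) :
    deriv (betaKernel (k + 1) (l + 1)) (betaMode k (l + 1)) =
      betaKernel k (l + 1) (betaMode k (l + 1)) := by
  have slope : ((k : ℝ) + l + 2) * (betaMode (k + 1) (l + 1) - betaMode k (l + 1)) =
      1 - betaMode k (l + 1) := by
    unfold betaMode
    push_cast
    field_simp
    ring
  rw [deriv_betaKernel, mul_left_comm, slope, betaKernel, betaKernel, pow_succ, mul_assoc]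

lemma deriv_betaKernel_betaMode (k l : ℕ) :
    deriv (betaKernel (k + 1) (l + 1)) (betaMode (k + 1) (l + 1)) = 0 := by
  rw [deriv_betaKernel, sub_self, mul_zero, mul_zero]

lemma antitoneOn_deriv_betaKernel (k l : ℕ) :
    AntitoneOn (deriv (betaKernel (k + 1) (l + 1)))
      (Icc (betaMode k (l + 1)) (betaMode (k + 1) (l + 1))) := by
  set q := betaMode (k + 1) (l + 1) with hq
  have turning_point : k * q / (k + 1) ≤ betaMode k (l + 1) := by
    have : k * q / (k + 1) = k / (k + l + 2) := by
      rw [hq, betaMode]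
      push_cast
      field_simp
      ring
    rw [this, betaMode]
    push_cast
    exact div_le_div_of_nonneg_left (by positivity) (by positivity) (by linarith)
  intro x hx y hy hxy
  have hx0 : 0 ≤ x := (betaMode_nonneg _ _).trans hx.1
  have hy1 : y ≤ 1 := hy.2.trans (betaMode_le_one _ _)
  have hpow : y ^ k * (q - y) ≤ x ^ k * (q - x) :=
    antitoneOn_pow_mul_sub k (betaMode_nonneg _ _) (turning_point.trans hx.1)
      (turning_point.trans hy.1) hxy
  have hq_sub : 0 ≤ q - x := sub_nonneg.2 hx.2
  have h_one_sub_pow : (1 - y) ^ l ≤ (1 - x) ^ l :=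
    pow_le_pow_left₀ (sub_nonneg.2 hy1) (sub_le_sub_left hxy 1) l
  have h_pow_nonneg : 0 ≤ (1 - y) ^ l := pow_nonneg (sub_nonneg.2 hy1) l
  calc deriv (betaKernel (k + 1) (l + 1)) y
      = (k + l + 2) * (y ^ k * (q - y) * (1 - y) ^ l) := by
        rw [deriv_betaKernel, betaKernel, mul_right_comm]
    _ ≤ (k + l + 2) * (x ^ k * (q - x) * (1 - x) ^ l) :=
        mul_le_mul_of_nonneg_left
          (mul_le_mul hpow h_one_sub_pow h_pow_nonneg (mul_nonneg (pow_nonneg hx0 k) hq_sub))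
          (by positivity)
    _ = deriv (betaKernel (k + 1) (l + 1)) x := by
        rw [deriv_betaKernel, betaKernel, mul_right_comm]

end BetaKernel

lemma fFun_succ_left (k l : ℕ) (x : ℝ) : fFun (k + 1) l x =
    if x ≤ betaMode k l then betaKernel k l (betaMode k l) * x
    else if x ≤ betaMode (k + 1) l then betaKernel (k + 1) l x
    else betaKernel (k + 1) l (betaMode (k + 1) l) := by
  have cast_sub : ((k + 1 : ℕ) : ℝ) - 1 = k := by push_cast; ring
  have cast_add_sub : ((k + 1 : ℕ) : ℝ) + l - 1 = k + l := by push_cast; ring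
  rw [betaKernel_betaMode, betaKernel_betaMode, fFun, cast_sub, cast_add_sub,
    Nat.add_sub_cancel, show k + 1 + l - 1 = k + l by omega]
  rfl

lemma fFun_eq_tangentExtension (k l : ℕ) : fFun (k + 1) (l + 1) =
    tangentExtension (betaKernel (k + 1) (l + 1)) (betaMode k (l + 1))
      (betaMode (k + 1) (l + 1)) := by
  funext x
  have left_tangent : betaKernel (k + 1) (l + 1) (betaMode k (l + 1)) +
      deriv (betaKernel (k + 1) (l + 1)) (betaMode k (l + 1)) * (x - betaMode k (l + 1)) =
        betaKernel k (l + 1) (betaMode k (l + 1)) * x := by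
    rw [deriv_betaKernel_betaMode_left, betaKernel_succ_left]
    ring
  rw [fFun_succ_left, tangentExtension, left_tangent, deriv_betaKernel_betaMode, zero_mul, add_zero]

lemma betaKernel_le_fFun (k l : ℕ) {x : ℝ} (hx : x ∈ Icc (0 : ℝ) 1) :
    betaKernel (k + 1) l x ≤ fFun (k + 1) l x := by
  rw [fFun_succ_left]
  split_ifs
  · rw [betaKernel_succ_left]
    exact mul_le_mul_of_nonneg_right (betaKernel_le_betaKernel_betaMode k l hx) hx.1
  · exact le_rfl
  · exact betaKernel_le_betaKernel_betaMode (k + 1) l hx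

theorem stmt6_general (k l : ℕ) (hk : 1 ≤ k) (hl : 1 ≤ l) :
    MonotoneOn (fFun k l) (Icc 0 1) ∧ ConcaveOn ℝ (Icc 0 1) (fFun k l) ∧
    ∀ x ∈ Icc (0 : ℝ) 1, x ^ k * (1 - x) ^ l ≤ fFun k l x := by
  obtain ⟨k, rfl⟩ := Nat.exists_eq_add_of_le' hk
  obtain ⟨l, rfl⟩ := Nat.exists_eq_add_of_le' hl
  have hab := betaMode_le_betaMode_succ_left k (l + 1)
  have hdiff : ∀ x ∈ Icc (betaMode k (l + 1)) (betaMode (k + 1) (l + 1)),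
      DifferentiableAt ℝ (betaKernel (k + 1) (l + 1)) x :=
    fun x _ => (hasDerivAt_betaKernel k l x).differentiableAt
  have hanti := antitoneOn_deriv_betaKernel k l
  have hnonneg : ∀ x ∈ Icc (betaMode k (l + 1)) (betaMode (k + 1) (l + 1)),
      0 ≤ deriv (betaKernel (k + 1) (l + 1)) x := fun x hx => by
    simpa only [deriv_betaKernel_betaMode] using hanti hx (right_mem_Icc.2 hab) hx.2
  refine ⟨?_, ?_, fun x => betaKernel_le_fFun k (l + 1)⟩ <;> rw [fFun_eq_tangentExtension]
  · exact (monotone_tangentExtension hab hdiff hnonneg).monotoneOn _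
  · exact (concaveOn_univ_tangentExtension hab hdiff hanti).subset (subset_univ _) (convex_Icc 0 1)

theorem stmt6 (k l : ℕ) (hl : 1 ≤ l) (hlk : l ≤ k) (hm : 6 ≤ k + l) :
    MonotoneOn (fFun k l) (Set.Icc 0 1) ∧ ConcaveOn ℝ (Set.Icc 0 1) (fFun k l) ∧
    ∀ x ∈ Set.Icc (0 : ℝ) 1, x ^ k * (1 - x) ^ l ≤ fFun k l x :=
  stmt6_general k l (hl.trans hlk) hl
end

section
/- Let k ≥ l ≥ 1 be integers with k + l ≥ 6, m = k + l, and let α be a real with 0 ≤ α ≤ 1/2. Then the function f_*(d) = α(1−α)^m f(d) + ((k−1)^{k−1} l^l/(m−1)^{m−1})(1−α)α^m(1−d) attains its maximum over [0,1] at some point of the interval [(k−1)/(m−1), k/m]; that is, there exists d ∈ [(k−1)/(m−1), k/m] with f_*(d) ≥ f_*(d′) for all d′ ∈ [0,1]. -/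
open scoped BigOperators

/-! On `[0, (k-1)/(m-1)]` the function `f_*` is affine with slope a nonnegative multiple of
`α(1-α)^m - (1-α)α^m`, which is nonnegative because `α ≤ 1 - α`; on `[k/m, 1]` the function `f` is
constant, so `f_*` is nonincreasing. The pieces of `f` agree at both breakpoints, so the continuous
middle piece attains a maximum over `[(k-1)/(m-1), k/m]` that is at least both breakpoint values,
hence a global maximum. -/

theorem exists_mem_Icc_forall_le_of_monotoneOn_antitoneOn {X Y : Type*}
    [LinearOrder X] [TopologicalSpace X] [CompactIccSpace X]
    [LinearOrder Y] [TopologicalSpace Y] [ClosedIciTopology Y] {g : X → Y} {a b : X}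
    (hab : a ≤ b) (hmono : MonotoneOn g (Set.Iic a)) (hcont : ContinuousOn g (Set.Icc a b))
    (hanti : AntitoneOn g (Set.Ici b)) :
    ∃ d ∈ Set.Icc a b, ∀ x, g x ≤ g d := by
  obtain ⟨d, hd, hmax⟩ := isCompact_Icc.exists_isMaxOn (Set.nonempty_Icc.2 hab) hcont
  refine ⟨d, hd, fun x => ?_⟩
  rcases le_total x a with hxa | hax
  · exact (hmono hxa Set.self_mem_Iic hxa).trans (hmax (Set.left_mem_Icc.2 hab))
  rcases le_total x b with hxb | hbx
  · exact hmax ⟨hax, hxb⟩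
  · exact (hanti Set.self_mem_Ici hbx hbx).trans (hmax (Set.right_mem_Icc.2 hab))

theorem mul_pow_succ_le_mul_pow_succ {R : Type*} [CommSemiring R] [PartialOrder R]
    [IsOrderedRing R] {a b : R} (ha : 0 ≤ a) (hab : a ≤ b) (n : ℕ) :
    b * a ^ (n + 1) ≤ a * b ^ (n + 1) :=
  calc b * a ^ (n + 1) = a * b * a ^ n := by ring
    _ ≤ a * b * b ^ n :=
      mul_le_mul_of_nonneg_left (pow_le_pow_left₀ ha hab n) (mul_nonneg ha (ha.trans hab))
    _ = a * b ^ (n + 1) := by ring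

theorem div_add_pow_mul_one_sub_div_add_pow {K : Type*} [Field K] {x y : K} (h : x + y ≠ 0)
    (i j : ℕ) :
    (x / (x + y)) ^ i * (1 - x / (x + y)) ^ j = x ^ i * y ^ j / (x + y) ^ (i + j) := by
  rw [one_sub_div h, add_sub_cancel_left, div_pow, div_pow, div_mul_div_comm, ← pow_add]

/-- The slope `(k-1)^(k-1) l^l / (m-1)^(m-1)` of the linear piece of `f`, which is also the
coefficient of the second term of `f_*`; spelled as in `fFun`. -/
noncomputable def fSlope (k l : ℕ) : ℝ :=
  ((k : ℝ) - 1) ^ (k - 1) * (l : ℝ) ^ l / ((k : ℝ) + l - 1) ^ (k + l - 1)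

/-- The objective `f_*(d)` of the paper, with its dependence on `α` made explicit. -/
noncomputable def fStar (k l : ℕ) (α d : ℝ) : ℝ :=
  α * (1 - α) ^ (k + l) * fFun k l d + fSlope k l * (1 - α) * α ^ (k + l) * (1 - d)

section Pieces

variable {k l : ℕ}

theorem fSlope_nonneg (hk : 1 ≤ k) : 0 ≤ fSlope k l := by
  have hk' : (0 : ℝ) ≤ k - 1 := sub_nonneg.2 (Nat.one_le_cast.2 hk)
  have hm' : (0 : ℝ) ≤ k + l - 1 := by linarith [(l.cast_nonneg : (0 : ℝ) ≤ l)]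
  unfold fSlope
  positivity

theorem left_breakpoint_le_right (hm : 2 ≤ k + l) :
    ((k : ℝ) - 1) / (k + l - 1) ≤ k / (k + l) := by
  have hm' : (2 : ℝ) ≤ k + l := mod_cast hm
  rw [div_le_div_iff₀ (by linarith) (by linarith)]
  linarith [(l.cast_nonneg : (0 : ℝ) ≤ l)]

theorem fSlope_mul_left_breakpoint (hk : 1 ≤ k) (hm : 2 ≤ k + l) :
    fSlope k l * (((k : ℝ) - 1) / (k + l - 1)) =
      (((k : ℝ) - 1) / (k + l - 1)) ^ k * (1 - ((k : ℝ) - 1) / (k + l - 1)) ^ l := by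
  have hm' : (2 : ℝ) ≤ k + l := mod_cast hm
  have hadd : (k : ℝ) + l - 1 = (k - 1) + l := by ring
  rw [fSlope, hadd, div_add_pow_mul_one_sub_div_add_pow (by linarith), div_mul_div_comm,
    ← pow_sub_one_mul (by omega : k ≠ 0) ((k : ℝ) - 1),
    ← pow_sub_one_mul (by omega : k + l ≠ 0) ((k : ℝ) - 1 + l), mul_right_comm]

theorem fFun_of_le_left {x : ℝ} (hx : x ≤ ((k : ℝ) - 1) / (k + l - 1)) :
    fFun k l x = fSlope k l * x :=
  if_pos hx

theorem fFun_of_mem_Icc (hk : 1 ≤ k) (hm : 2 ≤ k + l) {x : ℝ}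
    (hx : x ∈ Set.Icc (((k : ℝ) - 1) / (k + l - 1)) (k / (k + l))) :
    fFun k l x = x ^ k * (1 - x) ^ l := by
  rcases hx.1.eq_or_lt with rfl | hlt
  · rw [fFun_of_le_left le_rfl, fSlope_mul_left_breakpoint hk hm]
  · rw [fFun, if_neg hlt.not_ge, if_pos hx.2]

theorem fFun_of_right_le (hk : 1 ≤ k) (hm : 2 ≤ k + l) {x : ℝ}
    (hx : (k : ℝ) / (k + l) ≤ x) : fFun k l x = lam0 k l := by
  have hab := left_breakpoint_le_right hm
  rcases hx.eq_or_lt with rfl | hlt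
  · have hm' : (2 : ℝ) ≤ k + l := mod_cast hm
    rw [fFun_of_mem_Icc hk hm (Set.right_mem_Icc.2 hab),
      div_add_pow_mul_one_sub_div_add_pow (by linarith), lam0]
  · rw [fFun, if_neg (hab.trans_lt hlt).not_ge, if_neg hlt.not_ge, lam0]

variable {α : ℝ}

theorem monotoneOn_fStar (hk : 1 ≤ k) (hα0 : 0 ≤ α) (hα : α ≤ 1 / 2) :
    MonotoneOn (fStar k l α) (Set.Iic (((k : ℝ) - 1) / (k + l - 1))) := by
  have hpow : (1 - α) * α ^ (k + l) ≤ α * (1 - α) ^ (k + l) := by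
    obtain ⟨n, hn⟩ : ∃ n, k + l = n + 1 := ⟨k + l - 1, by omega⟩
    exact hn ▸ mul_pow_succ_le_mul_pow_succ hα0 (by linarith) n
  have haffine {x : ℝ} (hx : x ≤ ((k : ℝ) - 1) / (k + l - 1)) :
      fStar k l α x = fSlope k l * (α * (1 - α) ^ (k + l) - (1 - α) * α ^ (k + l)) * x
        + fSlope k l * (1 - α) * α ^ (k + l) := by
    rw [fStar, fFun_of_le_left hx]
    ring
  intro x hx y hy hxy
  rw [haffine hx, haffine hy]
  gcongr
  exact mul_nonneg (fSlope_nonneg hk) (sub_nonneg.2 hpow)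

theorem continuousOn_fStar (hk : 1 ≤ k) (hm : 2 ≤ k + l) :
    ContinuousOn (fStar k l α) (Set.Icc (((k : ℝ) - 1) / (k + l - 1)) (k / (k + l))) := by
  have hf : ContinuousOn (fFun k l) (Set.Icc (((k : ℝ) - 1) / (k + l - 1)) (k / (k + l))) :=
    ContinuousOn.congr (f := fun x => x ^ k * (1 - x) ^ l) (by fun_prop)
      fun _ => fFun_of_mem_Icc hk hm
  unfold fStar
  fun_prop

theorem antitoneOn_fStar (hk : 1 ≤ k) (hm : 2 ≤ k + l) (hα0 : 0 ≤ α) (hα : α ≤ 1) :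
    AntitoneOn (fStar k l α) (Set.Ici ((k : ℝ) / (k + l))) := by
  intro x hx y hy hxy
  rw [fStar, fStar, fFun_of_right_le hk hm hx, fFun_of_right_le hk hm hy]
  have : 0 ≤ 1 - α := sub_nonneg.2 hα
  have : 0 ≤ fSlope k l := fSlope_nonneg hk
  gcongr

end Pieces

theorem stmt7_general {k l : ℕ} (hk : 1 ≤ k) (hm : 2 ≤ k + l) {α : ℝ} (hα0 : 0 ≤ α)
    (hα : α ≤ 1 / 2) :
    ∃ d ∈ Set.Icc (((k : ℝ) - 1) / (k + l - 1)) (k / (k + l)),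
      ∀ d', fStar k l α d' ≤ fStar k l α d :=
  exists_mem_Icc_forall_le_of_monotoneOn_antitoneOn (left_breakpoint_le_right hm)
    (monotoneOn_fStar hk hα0 hα) (continuousOn_fStar hk hm)
    (antitoneOn_fStar hk hm hα0 (by linarith))

theorem stmt7 (k l : ℕ) (hl : 1 ≤ l) (hlk : l ≤ k) (hm : 6 ≤ k + l)
    (α : ℝ) (hα0 : 0 ≤ α) (hα : α ≤ 1 / 2) :
    ∃ d ∈ Set.Icc (((k : ℝ) - 1) / ((k : ℝ) + l - 1)) ((k : ℝ) / ((k : ℝ) + l)),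
      ∀ d' ∈ Set.Icc (0 : ℝ) 1,
        α * (1 - α) ^ (k + l) * fFun k l d'
            + (((k : ℝ) - 1) ^ (k - 1) * (l : ℝ) ^ l / ((k : ℝ) + l - 1) ^ (k + l - 1))
              * (1 - α) * α ^ (k + l) * (1 - d')
          ≤ α * (1 - α) ^ (k + l) * fFun k l d
            + (((k : ℝ) - 1) ^ (k - 1) * (l : ℝ) ^ l / ((k : ℝ) + l - 1) ^ (k + l - 1))
              * (1 - α) * α ^ (k + l) * (1 - d) := by
  obtain ⟨d, hd, hmax⟩ := stmt7_general (by omega : 1 ≤ k) (by omega) hα0 hα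
  exact ⟨d, hd, fun d' _ => hmax d'⟩
end

section
/- Let x ∈ X and y ∈ Y be non-adjacent (neither xy nor yx is an arc of G). Then n² · Pr[φ ∈ 𝒮 and both x and y lie in the image of φ] ≤ (m(m−1)/C(m,k)) · (α+β)(1−D)^{m−2}. -/
open scoped BigOperators

/-!
Let `x` and `y` be distinct and non-adjacent. In a copy of `S_{k,l}` through both, neither of them
is the center, so the center is a neighbour of `y` and all the leaves are non-neighbours of `x`.
Forget which leaves are out-leaves by shuffling the `m` leaf positions, once for each `k`-subset `T`
of positions, so that `T` receives the out-leaves: as the orientation of the arcs at the center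
recovers `T`, each copy yields `C(m,k)` different pairs. Such a pair consists of a center, with at
most `ρ(y) n` choices, and of an `m`-tuple of non-neighbours of `x` containing `x` and `y`, with at
most `m (m - 1) ((1 - ρ(x)) n) ^ (m - 2)` choices. Finally `ρ(x) ≥ D`, and `ρ(y) ≤ α + β` by
splitting the neighbours of `y` between `X` and `Y`.
-/

section Tuples

variable {ι α : Type*} [Finite ι] {s : Set α}

lemma ncard_forall_mem_apply_eq_apply_eq_le (hs : s.Finite) (x y : α) {i j : ι} (hij : i ≠ j) :
    {ψ : ι → α | (∀ t, ψ t ∈ s) ∧ ψ i = x ∧ ψ j = y}.ncard ≤ s.ncard ^ (Nat.card ι - 2) := by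
  have := hs.to_subtype
  let restrict (ψ : {ψ : ι → α | (∀ t, ψ t ∈ s) ∧ ψ i = x ∧ ψ j = y})
      (t : ({i, j}ᶜ : Set ι)) : s := ⟨ψ.1 t, ψ.2.1 t⟩
  have restrict_injective : Function.Injective restrict := by
    rintro ⟨ψ, _, hψi, hψj⟩ ⟨ψ', _, hψi', hψj'⟩ h
    refine Subtype.ext (funext fun t => ?_)
    by_cases hti : t = i
    · exact hti ▸ hψi.trans hψi'.symm
    by_cases htj : t = j
    · exact htj ▸ hψj.trans hψj'.symm
    exact congrArg Subtype.val (congrFun h ⟨t, by simp [hti, htj]⟩)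
  calc _ ≤ Nat.card (({i, j}ᶜ : Set ι) → s) := Nat.card_le_card_of_injective _ restrict_injective
    _ = s.ncard ^ (Nat.card ι - 2) := by
      rw [Nat.card_fun, Nat.card_coe_set_eq, Nat.card_coe_set_eq, Set.ncard_compl,
        Set.ncard_pair hij]

lemma ncard_forall_mem_and_mem_range_and_mem_range_le (hs : s.Finite) {x y : α} (hne : x ≠ y) :
    {ψ : ι → α | (∀ t, ψ t ∈ s) ∧ x ∈ Set.range ψ ∧ y ∈ Set.range ψ}.ncard ≤
      Nat.card ι * (Nat.card ι - 1) * s.ncard ^ (Nat.card ι - 2) := by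
  classical
  have := Fintype.ofFinite ι
  calc _ ≤ (⋃ p ∈ (Finset.univ : Finset ι).offDiag,
          {ψ : ι → α | (∀ t, ψ t ∈ s) ∧ ψ p.1 = x ∧ ψ p.2 = y}).ncard := by
        refine Set.ncard_le_ncard ?_ ((Set.Finite.pi' fun _ => hs).subset ?_)
        · rintro ψ ⟨hψ, ⟨i, rfl⟩, ⟨j, rfl⟩⟩
          have hij : i ≠ j := fun h => hne (congrArg ψ h)
          exact Set.mem_biUnion (x := (i, j)) (by simpa using hij) ⟨hψ, rfl, rfl⟩
        · exact Set.iUnion₂_subset fun _ _ _ hψ => hψ.1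
    _ ≤ ∑ p ∈ (Finset.univ : Finset ι).offDiag,
          {ψ : ι → α | (∀ t, ψ t ∈ s) ∧ ψ p.1 = x ∧ ψ p.2 = y}.ncard :=
        Finset.set_ncard_biUnion_le _ _
    _ ≤ (Finset.univ : Finset ι).offDiag.card * s.ncard ^ (Nat.card ι - 2) :=
        Finset.sum_le_card_nsmul _ _ _ fun p hp =>
          ncard_forall_mem_apply_eq_apply_eq_le hs x y (Finset.mem_offDiag.1 hp).2.2
    _ = Nat.card ι * (Nat.card ι - 1) * s.ncard ^ (Nat.card ι - 2) := by
        rw [Finset.offDiag_card, Finset.card_univ, ← Nat.card_eq_fintype_card, Nat.mul_sub_one]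

end Tuples

lemma exists_perm_mem_iff_val_lt {k n : ℕ} {T : Finset (Fin n)} (hT : T.card = k) :
    ∃ σ : Equiv.Perm (Fin n), ∀ i, i ∈ T ↔ (σ i).val < k := by
  have card_eq : Fintype.card {i // i ∈ T} = Fintype.card {i : Fin n // i.val < k} := by
    have : T.card ≤ n := card_finset_fin_le T
    rw [Fintype.card_coe, Fintype.card_subtype, Fin.card_filter_val_lt]
    omega
  let e := Fintype.equivOfCardEq card_eq
  exact ⟨e.extendSubtype, fun i =>
    ⟨e.extendSubtype_mem i, not_imp_not.1 (e.extendSubtype_not_mem i)⟩⟩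

/-- The neighbourhood `N⁺(v) ∪ N⁻(v)` of `v` in the digraph with arc relation `A`; its density is
`rho A v`. -/
def nbhd {V : Type*} (A : V → V → Prop) (v : V) : Set V := {u | A v u ∨ A u v}

section StarEmbeddings

variable {k l : ℕ} {V : Type*} {A : V → V → Prop} {φ : Fin (k + l + 1) → V} {x y : V}

namespace IsStarEmb

lemma arc_center_leaf_iff (hφ : IsStarEmb k l A φ) (i : Fin (k + l)) :
    A (φ 0) (φ i.succ) ↔ i.val < k := by
  simp [← hφ.2, StarArc]

lemma arc_leaf_center_iff (hφ : IsStarEmb k l A φ) (i : Fin (k + l)) :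
    A (φ i.succ) (φ 0) ↔ k ≤ i.val := by
  simp [← hφ.2, StarArc]

lemma not_arc_leaf_leaf (hφ : IsStarEmb k l A φ) (i j : Fin (k + l)) :
    ¬ A (φ i.succ) (φ j.succ) := by
  simp [← hφ.2, StarArc]

lemma leaf_mem_nbhd_center (hφ : IsStarEmb k l A φ) (i : Fin (k + l)) :
    φ i.succ ∈ nbhd A (φ 0) :=
  (lt_or_ge i.val k).imp (hφ.arc_center_leaf_iff i).2 (hφ.arc_leaf_center_iff i).2

lemma center_mem_nbhd_leaf (hφ : IsStarEmb k l A φ) (i : Fin (k + l)) :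
    φ 0 ∈ nbhd A (φ i.succ) :=
  (hφ.leaf_mem_nbhd_center i).symm

lemma leaf_notMem_nbhd_leaf (hφ : IsStarEmb k l A φ) (i j : Fin (k + l)) :
    φ i.succ ∉ nbhd A (φ j.succ) :=
  not_or.2 ⟨hφ.not_arc_leaf_leaf j i, hφ.not_arc_leaf_leaf i j⟩

lemma mem_range_tail_of_notMem_nbhd (hφ : IsStarEmb k l A φ) (hne : x ≠ y) (hy : y ∉ nbhd A x)
    (hxφ : x ∈ Set.range φ) (hyφ : y ∈ Set.range φ) : x ∈ Set.range (Fin.tail φ) := by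
  obtain ⟨a, rfl⟩ := hxφ
  obtain ⟨b, rfl⟩ := hyφ
  cases a using Fin.cases with
  | succ i => exact ⟨i, rfl⟩
  | zero =>
    cases b using Fin.cases with
    | zero => exact absurd rfl hne
    | succ j => exact absurd (hφ.leaf_mem_nbhd_center j) hy

end IsStarEmb

variable [Finite V]

lemma choose_mul_ncard_isStarEmb_le {P : (Fin (k + l + 1) → V) → Prop}
    {S : Set (V × (Fin (k + l) → V))}
    (hS : ∀ φ, IsStarEmb k l A φ → P φ →
      ∀ σ : Equiv.Perm (Fin (k + l)), (φ 0, Fin.tail φ ∘ σ) ∈ S) :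
    (k + l).choose k * {φ | IsStarEmb k l A φ ∧ P φ}.ncard ≤ S.ncard := by
  choose! σ hσ using fun T : Finset (Fin (k + l)) => exists_perm_mem_iff_val_lt (k := k) (T := T)
  let outSets : Finset (Finset (Fin (k + l))) := Finset.powersetCard k Finset.univ
  let shuffle (p : Finset (Fin (k + l)) × (Fin (k + l + 1) → V)) : V × (Fin (k + l) → V) :=
    (p.2 0, Fin.tail p.2 ∘ σ p.1)
  have mem_iff_arc {T : Finset (Fin (k + l))} (hT : T ∈ outSets) {φ : Fin (k + l + 1) → V}
      (hφ : IsStarEmb k l A φ) (i : Fin (k + l)) :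
      i ∈ T ↔ A (φ 0) ((Fin.tail φ ∘ σ T) i) :=
    (hσ T (Finset.mem_powersetCard_univ.1 hT) i).trans (hφ.arc_center_leaf_iff _).symm
  have shuffle_injOn :
      Set.InjOn shuffle (outSets ×ˢ {φ | IsStarEmb k l A φ ∧ P φ}) := by
    rintro ⟨T, φ⟩ ⟨hT, hφ, -⟩ ⟨T', φ'⟩ ⟨hT', hφ', -⟩ h
    obtain ⟨hcenter, hleaves⟩ := Prod.mk.inj h
    obtain rfl : T = T' := by
      ext i
      rw [mem_iff_arc hT hφ, mem_iff_arc hT' hφ', hleaves]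
      exact iff_of_eq (congrArg (A · _) hcenter)
    have htail : Fin.tail φ = Fin.tail φ' := (σ T).surjective.injective_comp_right hleaves
    rw [← Fin.cons_self_tail φ, ← Fin.cons_self_tail φ', htail]
    exact congrArg (T, Fin.cons · _) hcenter
  calc (k + l).choose k * {φ | IsStarEmb k l A φ ∧ P φ}.ncard
      = ((outSets : Set (Finset (Fin (k + l)))) ×ˢ {φ | IsStarEmb k l A φ ∧ P φ}).ncard := by
        simp [Set.ncard_prod, outSets]
    _ ≤ S.ncard := Set.ncard_le_ncard_of_injOn shuffle
        (fun p hp => hS p.2 hp.2.1 hp.2.2 (σ p.1)) shuffle_injOn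

lemma choose_mul_ncard_isStarEmb_through_le (hne : x ≠ y) (hy : y ∉ nbhd A x) :
    (k + l).choose k *
        {φ | IsStarEmb k l A φ ∧ x ∈ Set.range φ ∧ y ∈ Set.range φ}.ncard ≤
      (nbhd A y).ncard * ((k + l) * (k + l - 1) * (nbhd A x)ᶜ.ncard ^ (k + l - 2)) := by
  let leafTuples : Set (Fin (k + l) → V) :=
    {ψ | (∀ t, ψ t ∈ (nbhd A x)ᶜ) ∧ x ∈ Set.range ψ ∧ y ∈ Set.range ψ}
  have shuffle_mem (φ : Fin (k + l + 1) → V) (hφ : IsStarEmb k l A φ)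
      (h : x ∈ Set.range φ ∧ y ∈ Set.range φ) (σ : Equiv.Perm (Fin (k + l))) :
      (φ 0, Fin.tail φ ∘ σ) ∈ nbhd A y ×ˢ leafTuples := by
    have hx : x ∉ nbhd A y := fun hx => hy hx.symm
    have hxleaf := hφ.mem_range_tail_of_notMem_nbhd hne hy h.1 h.2
    have hyleaf := hφ.mem_range_tail_of_notMem_nbhd hne.symm hx h.2 h.1
    refine ⟨?_, ?_, ?_⟩
    · obtain ⟨j, rfl⟩ := hyleaf
      exact hφ.center_mem_nbhd_leaf j
    · obtain ⟨i, rfl⟩ := hxleaf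
      exact fun t => hφ.leaf_notMem_nbhd_leaf (σ t) i
    · rw [σ.surjective.range_comp]
      exact ⟨hxleaf, hyleaf⟩
  calc _ ≤ (nbhd A y ×ˢ leafTuples).ncard := choose_mul_ncard_isStarEmb_le shuffle_mem
    _ = (nbhd A y).ncard * leafTuples.ncard := Set.ncard_prod
    _ ≤ _ := by
      gcongr
      simpa only [Nat.card_fin] using ncard_forall_mem_and_mem_range_and_mem_range_le
        (ι := Fin (k + l)) (nbhd A x)ᶜ.toFinite hne

end StarEmbeddings

section Densities

variable {V : Type*} [Fintype V] (A : V → V → Prop)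

lemma rho_eq_ncard_nbhd_div (v : V) : rho A v = (nbhd A v).ncard / Fintype.card V := rfl

lemma one_sub_rho [Nonempty V] (v : V) :
    1 - rho A v = (nbhd A v)ᶜ.ncard / Fintype.card V := by
  have hn : (Fintype.card V : ℝ) ≠ 0 := Nat.cast_ne_zero.2 Fintype.card_ne_zero
  have hadd : ((nbhd A v).ncard + (nbhd A v)ᶜ.ncard : ℝ) = Fintype.card V := by
    rw [← Nat.card_eq_fintype_card]
    exact_mod_cast Set.ncard_add_ncard_compl (nbhd A v)
  rw [rho_eq_ncard_nbhd_div, eq_div_iff hn, sub_mul, div_mul_cancel₀ _ hn]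
  linarith

lemma rho_nonneg (v : V) : 0 ≤ rho A v := by
  unfold rho
  positivity

lemma rho_le_muSet_add_rhoIn_compl (B : Set V) (v : V) :
    rho A v ≤ muSet B + rhoIn A Bᶜ v := by
  have hsplit : (nbhd A v).ncard ≤ B.ncard + (nbhd A v ∩ Bᶜ).ncard :=
    (Set.ncard_le_ncard fun u hu => (em (u ∈ B)).imp_right fun huB => ⟨hu, huB⟩).trans
      (Set.ncard_union_le _ _)
  calc rho A v ≤ (B.ncard + (nbhd A v ∩ Bᶜ).ncard) / Fintype.card V :=
        div_le_div_of_nonneg_right (mod_cast hsplit) (Nat.cast_nonneg _)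
    _ = muSet B + rhoIn A Bᶜ v := add_div _ _ _

variable {A} {x y : V}

lemma Dmin_le_rho (hx : x ∈ bigX A) : Dmin A ≤ rho A x :=
  csInf_le (Set.toFinite _).bddBelow ⟨x, hx, rfl⟩

lemma rhoIn_bigY_le_betaY (hy : y ∈ bigY A) : rhoIn A (bigY A) y ≤ betaY A :=
  le_csSup (Set.toFinite _).bddAbove ⟨y, hy, rfl⟩

lemma rho_le_alphaX_add_betaY (hy : y ∈ bigY A) : rho A y ≤ alphaX A + betaY A :=
  (rho_le_muSet_add_rhoIn_compl A (bigX A) y).trans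
    (add_le_add_right (rhoIn_bigY_le_betaY hy) _)

lemma sq_mul_starProbOn_mem_range_mem_range_le {k l : ℕ} (hm : 2 ≤ k + l) (hne : x ≠ y)
    (hy : y ∉ nbhd A x) :
    (Fintype.card V : ℝ) ^ 2 *
        starProbOn k l A (fun φ => x ∈ Set.range φ ∧ y ∈ Set.range φ)
      ≤ ((k : ℝ) + l) * ((k : ℝ) + l - 1) / (Nat.choose (k + l) k : ℝ)
          * rho A y * (1 - rho A x) ^ (k + l - 2) := by
  have : Nonempty V := ⟨x⟩
  have hn : (0 : ℝ) < Fintype.card V := Nat.cast_pos.2 Fintype.card_pos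
  have hC : (0 : ℝ) < (k + l).choose k :=
    Nat.cast_pos.2 (Nat.choose_pos (Nat.le_add_right k l))
  set n := (Fintype.card V : ℝ)
  set copies := {φ | IsStarEmb k l A φ ∧ x ∈ Set.range φ ∧ y ∈ Set.range φ}
  have hcount : ((k + l).choose k : ℝ) * copies.ncard ≤
      (nbhd A y).ncard * ((k + l) * (k + l - 1) * (nbhd A x)ᶜ.ncard ^ (k + l - 2)) := by
    have h := choose_mul_ncard_isStarEmb_through_le (k := k) (l := l) hne hy
    rw [← Nat.cast_le (α := ℝ)] at h
    simpa [copies, Nat.cast_sub (show 1 ≤ k + l by omega)] using h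
  have hpow : n ^ (k + l + 1) = n ^ 2 * (n * n ^ (k + l - 2)) := by
    rw [← pow_succ', ← pow_add]
    congr 1
    omega
  calc n ^ 2 * starProbOn k l A (fun φ => x ∈ Set.range φ ∧ y ∈ Set.range φ)
      = n ^ 2 * (copies.ncard / n ^ (k + l + 1)) := rfl
    _ = (k + l).choose k * copies.ncard / ((k + l).choose k * (n * n ^ (k + l - 2))) := by
        rw [hpow]
        field_simp
    _ ≤ (nbhd A y).ncard * ((k + l) * (k + l - 1) * (nbhd A x)ᶜ.ncard ^ (k + l - 2)) /
          ((k + l).choose k * (n * n ^ (k + l - 2))) := by gcongr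
    _ = (k + l) * (k + l - 1) / (k + l).choose k * ((nbhd A y).ncard / n) *
          ((nbhd A x)ᶜ.ncard / n) ^ (k + l - 2) := by
        rw [div_pow]
        field_simp
    _ = (k + l) * (k + l - 1) / (k + l).choose k * rho A y *
          (1 - rho A x) ^ (k + l - 2) := by rw [one_sub_rho, rho_eq_ncard_nbhd_div]

end Densities

theorem stmt16_general (k l : ℕ) (hm : 2 ≤ k + l) {V : Type*} [Fintype V] (A : V → V → Prop)
    (x y : V) (hx : x ∈ bigX A) (hy : y ∈ bigY A) (hxy : ¬ A x y) (hyx : ¬ A y x) :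
    (Fintype.card V : ℝ) ^ 2 *
        starProbOn k l A (fun φ => x ∈ Set.range φ ∧ y ∈ Set.range φ)
      ≤ (((k : ℝ) + l) * ((k : ℝ) + l - 1) / (Nat.choose (k + l) k : ℝ))
          * (alphaX A + betaY A) * (1 - Dmin A) ^ (k + l - 2) := by
  have : Nonempty V := ⟨x⟩
  have hne : x ≠ y := fun h => hy (h ▸ hx)
  have hm' : (2 : ℝ) ≤ k + l := mod_cast hm
  have hcoeff : 0 ≤ ((k : ℝ) + l) * ((k : ℝ) + l - 1) / (Nat.choose (k + l) k : ℝ) :=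
    div_nonneg (mul_nonneg (by linarith) (by linarith)) (Nat.cast_nonneg _)
  have hρy : rho A y ≤ alphaX A + betaY A := rho_le_alphaX_add_betaY hy
  have hρx : 1 - rho A x ≤ 1 - Dmin A := sub_le_sub_left (Dmin_le_rho hx) 1
  have hρx_nonneg : 0 ≤ 1 - rho A x := by
    rw [one_sub_rho]
    positivity
  have hαβ : 0 ≤ alphaX A + betaY A := (rho_nonneg A y).trans hρy
  refine (sq_mul_starProbOn_mem_range_mem_range_le hm hne (not_or.2 ⟨hxy, hyx⟩)).trans ?_
  gcongr

theorem stmt16 (k l : ℕ) (hl : 1 ≤ l) (hlk : l ≤ k) (hm : 6 ≤ k + l)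
    (V : Type) [Fintype V] (A : V → V → Prop)
    (hirr : Irreflexive A) (hopp : ∀ u v, A u v → ¬ A v u) (hn : 1 ≤ Fintype.card V)
    (x y : V) (hx : x ∈ bigX A) (hy : y ∈ bigY A) (hxy : ¬ A x y) (hyx : ¬ A y x) :
    (Fintype.card V : ℝ) ^ 2 *
        starProbOn k l A (fun φ => x ∈ Set.range φ ∧ y ∈ Set.range φ)
      ≤ (((k : ℝ) + l) * ((k : ℝ) + l - 1) / (Nat.choose (k + l) k : ℝ))
          * (alphaX A + betaY A) * (1 - Dmin A) ^ (k + l - 2) :=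
  stmt16_general k l (by omega) A x y hx hy hxy hyx
end

section
/- Suppose l ≥ 2. Then for every Z ⊆ V(G) with |Z| ≥ 2 and every vertex v ∈ V(G) \ Z: Pr[φ ∈ 𝒮 and φ(I ∪ O) ⊆ Z | φ(c) = v] ≤ (1 − ρ(Z)) · (μ(Z) − ρ⁻_Z(v))^k · (ρ⁻_Z(v))^l ≤ (1 − ρ(Z)) · λ₀ · μ(Z)^m. -/
open scoped BigOperators

/-!
Write `B = Z ∩ N⁻(v)` and `C = Z \ B`. A copy of the star with center `v` and leaves in `Z` sends
the `k` out-leaves to `C`, the `l` in-leaves to `B`, and distinct leaves to distinct nonadjacent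
vertices. Since `k, l ≥ 2`, every pair `(x, y) ∈ Z × Z` can be exchanged with the images of two
distinct leaves of the same types as `x` and `y`. The exchange turns a pair (copy, arbitrary pair of
`Z`) into a pair (map respecting the types, nonadjacent pair of `Z`) and is undone by repeating it,
so `#copies * |Z|² ≤ |C|^k * |B|^l * #(nonadjacent pairs)`, and `1 - ρ(Z)` is the number of
nonadjacent pairs divided by `|Z| (|Z| - 1)`. The second inequality is weighted AM-GM.
-/

section Exchange

open Function

variable {ι V γ : Type*}

lemma ncard_univ_pi [Fintype ι] (S : ι → Set V) :
    (Set.univ.pi S).ncard = ∏ t, (S t).ncard := by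
  rw [← Nat.card_coe_set_eq, Nat.card_congr (Equiv.Set.univPi S), Nat.card_pi]
  rfl

/-- Given a colouring `κ` of `V` and coordinates `i c ≠ j c'` reserved for each colour, exchange the
pair `(x, y)` with the values of `φ` at the coordinates reserved for the colours of `x` and `y`. -/
def coordExchange [DecidableEq ι] (κ : V → γ) (i j : γ → ι) : (ι → V) × V × V → (ι → V) × V × V
  | (φ, x, y) => (update (update φ (i (κ x)) x) (j (κ y)) y, φ (i (κ x)), φ (j (κ y)))

lemma coordExchange_coordExchange [DecidableEq ι] {κ : V → γ} {i j : γ → ι} (hij : ∀ c d, i c ≠ j d)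
    {φ : ι → V} (hi : ∀ c, κ (φ (i c)) = c) (hj : ∀ c, κ (φ (j c)) = c) (x y : V) :
    coordExchange κ i j (coordExchange κ i j (φ, x, y)) = (φ, x, y) := by
  have hji : j (κ y) ≠ i (κ x) := (hij _ _).symm
  simp [coordExchange, hi, hj, hji, update_comm (hij _ _)]

lemma ncard_mul_ncard_sq_le_of_color [Fintype ι] [Finite V] {κ : V → γ} {τ : ι → γ} {i j : γ → ι}
    (hi : RightInverse i τ) (hj : RightInverse j τ) (hij : ∀ c d, i c ≠ j d)
    {Z : Set V} {Q : Set (V × V)} {F : Set (ι → V)}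
    (hF : ∀ φ ∈ F, ∀ t, φ t ∈ Z ∧ κ (φ t) = τ t)
    (hQ : ∀ φ ∈ F, ∀ s t, s ≠ t → (φ s, φ t) ∈ Q) :
    F.ncard * Z.ncard ^ 2 ≤ (∏ t, {u ∈ Z | κ u = τ t}.ncard) * Q.ncard := by
  classical
  rw [sq, ← ncard_univ_pi, ← Set.ncard_prod, ← Set.ncard_prod, ← Set.ncard_prod]
  have exchange_inj : Set.InjOn (coordExchange κ i j) (F ×ˢ Z ×ˢ Z) := by
    refine Set.LeftInvOn.injOn (f₁' := coordExchange κ i j) fun ⟨φ, x, y⟩ hφ ↦ ?_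
    have color (t : ι) := (hF φ hφ.1 t).2
    exact coordExchange_coordExchange hij (fun c ↦ (color _).trans (hi c))
      (fun c ↦ (color _).trans (hj c)) x y
  refine Set.ncard_le_ncard_of_injOn _ ?_ exchange_inj
  rintro ⟨φ, x, y⟩ ⟨hφ, hx, hy⟩
  refine ⟨fun t _ ↦ ?_, hQ φ hφ _ _ (hij _ _)⟩
  rcases eq_or_ne t (j (κ y)) with rfl | htj
  · simpa [coordExchange, hj (κ y)] using hy
  rcases eq_or_ne t (i (κ x)) with rfl | hti
  · simpa [coordExchange, hij, hi (κ x)] using hx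
  · simpa [coordExchange, htj, hti] using hF φ hφ t

end Exchange

section Star

variable {k l : ℕ} {V : Type*} {A : V → V → Prop}

lemma starArc_succ_zero {s : Fin (k + l)} : StarArc k l s.succ 0 ↔ k ≤ (s : ℕ) := by
  simp [StarArc]

lemma not_starArc_succ_succ {s t : Fin (k + l)} : ¬ StarArc k l s.succ t.succ := by
  simp [StarArc]

/-- The maps inducing a copy of `S_{k,l}` with center `v` and all leaves in `Z`; their number is the
numerator of `Pr[φ ∈ 𝒮 and φ(I ∪ O) ⊆ Z | φ(c) = v]`. -/
def centeredStars (k l : ℕ) (A : V → V → Prop) (Z : Set V) (v : V) : Set (Fin (k + l + 1) → V) :=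
  {φ | IsStarEmb k l A φ ∧ φ 0 = v ∧ ∀ a, a ≠ 0 → φ a ∈ Z}

/-- The ordered pairs of distinct nonadjacent vertices of `Z`. -/
def nonadjPairs (A : V → V → Prop) (Z : Set V) : Set (V × V) :=
  {p ∈ Z.offDiag | ¬ (A p.1 p.2 ∨ A p.2 p.1)}

variable {Z : Set V} {v : V}

lemma injOn_tail_centeredStars : Set.InjOn Fin.tail (centeredStars k l A Z v) := by
  rintro φ ⟨-, hφ, -⟩ ψ ⟨-, hψ, -⟩ h
  rw [← Fin.cons_self_tail φ, ← Fin.cons_self_tail ψ, h, hφ, hψ]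

lemma adj_center_iff_of_mem_centeredStars {φ : Fin (k + l + 1) → V}
    (hφ : φ ∈ centeredStars k l A Z v) (s : Fin (k + l)) : A (Fin.tail φ s) v ↔ k ≤ (s : ℕ) := by
  obtain ⟨⟨-, harc⟩, rfl, -⟩ := hφ
  exact (harc _ _).symm.trans starArc_succ_zero

lemma mem_nonadjPairs_of_mem_centeredStars {φ : Fin (k + l + 1) → V}
    (hφ : φ ∈ centeredStars k l A Z v) {s t : Fin (k + l)} (hst : s ≠ t) :
    (Fin.tail φ s, Fin.tail φ t) ∈ nonadjPairs A Z := by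
  obtain ⟨⟨hinj, harc⟩, -, hZ⟩ := hφ
  refine ⟨⟨hZ _ s.succ_ne_zero, hZ _ t.succ_ne_zero,
    hinj.ne (Fin.succ_injective _ |>.ne hst)⟩, ?_⟩
  rintro (h | h)
  · exact not_starArc_succ_succ ((harc _ _).mpr h)
  · exact not_starArc_succ_succ ((harc _ _).mpr h)

lemma ncard_centeredStars_mul_ncard_sq_le [Finite V] (hk : 2 ≤ k) (hl : 2 ≤ l) :
    (centeredStars k l A Z v).ncard * Z.ncard ^ 2 ≤
      {u ∈ Z | ¬ A u v}.ncard ^ k * {u ∈ Z | A u v}.ncard ^ l * (nonadjPairs A Z).ncard := by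
  classical
  have hprod : ∏ s : Fin (k + l), {u ∈ Z | A u v = (k ≤ (s : ℕ))}.ncard =
      {u ∈ Z | ¬ A u v}.ncard ^ k * {u ∈ Z | A u v}.ncard ^ l := by
    have hnot (s : Fin k) : ¬ k ≤ (s : ℕ) := s.isLt.not_ge
    simp [Fin.prod_univ_add, hnot]
  rw [← hprod, ← injOn_tail_centeredStars.ncard_image]
  have hk0 : ¬ k ≤ 0 := by omega
  have hk1 : ¬ k ≤ 1 := by omega
  -- Leaves `0` and `1` are out-leaves, leaves `k` and `k + 1` are in-leaves.
  apply ncard_mul_ncard_sq_le_of_color (κ := fun u ↦ A u v) (τ := fun s : Fin (k + l) ↦ k ≤ (s : ℕ))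
    (i := fun c ↦ if c then ⟨k, by omega⟩ else ⟨0, by omega⟩)
    (j := fun c ↦ if c then ⟨k + 1, by omega⟩ else ⟨1, by omega⟩)
  · intro c
    by_cases hc : c <;> simp only [hc, if_true, if_false, le_refl, hk0]
  · intro c
    by_cases hc : c <;> simp only [hc, if_true, if_false, Nat.le_succ, hk1]
  · intro c d
    split_ifs <;> simp only [ne_eq, Fin.mk.injEq] <;> omega
  · rintro _ ⟨φ, hφ, rfl⟩ s
    exact ⟨hφ.2.2 _ s.succ_ne_zero, propext (adj_center_iff_of_mem_centeredStars hφ s)⟩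
  · rintro _ ⟨φ, hφ, rfl⟩ s t hst
    exact mem_nonadjPairs_of_mem_centeredStars hφ hst

end Star

section Density

variable {V : Type*} {A : V → V → Prop} {Z : Set V}

/-- The ordered pairs of adjacent vertices of `Z`; there are `2 ρ(Z) C(|Z|, 2)` of them. -/
def adjPairs (A : V → V → Prop) (Z : Set V) : Set (V × V) :=
  {p | p.1 ∈ Z ∧ p.2 ∈ Z ∧ (A p.1 p.2 ∨ A p.2 p.1)}

lemma ncard_offDiag_add_ncard (hZ : Z.Finite) : Z.offDiag.ncard + Z.ncard = Z.ncard * Z.ncard := by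
  classical
  lift Z to Finset V using hZ
  rw [← Finset.coe_offDiag, Set.ncard_coe_finset, Set.ncard_coe_finset, Finset.offDiag_card]
  exact Nat.sub_add_cancel (Nat.le_mul_self _)

lemma ncard_adjPairs_add_ncard_nonadjPairs (hirr : ∀ u, ¬ A u u) (hZ : Z.Finite) :
    (adjPairs A Z).ncard + (nonadjPairs A Z).ncard = Z.offDiag.ncard := by
  have hsub : nonadjPairs A Z ⊆ Z.offDiag := Set.sep_subset _ _
  rw [← Set.ncard_sdiff_add_ncard_of_subset hsub hZ.offDiag]
  congr 2
  ext ⟨x, y⟩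
  have hne : A x y ∨ A y x → x ≠ y := by
    rintro h rfl
    exact hirr x (or_self_iff.mp h)
  simp only [adjPairs, nonadjPairs, Set.mem_ofPred_eq, Set.mem_sdiff, Set.mem_offDiag]
  tauto

variable [Fintype V]

lemma one_sub_densSet (hirr : ∀ u, ¬ A u u) (hZ : 2 ≤ Z.ncard) :
    1 - densSet A Z = (nonadjPairs A Z).ncard / (Z.ncard * (Z.ncard - 1)) := by
  have hsum : ((adjPairs A Z).ncard : ℝ) + (nonadjPairs A Z).ncard =
      Z.ncard * (Z.ncard - 1) := by
    have hadj := ncard_adjPairs_add_ncard_nonadjPairs hirr Z.toFinite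
    have hoff := ncard_offDiag_add_ncard Z.toFinite
    rw [mul_sub_one, eq_sub_iff_add_eq]
    exact_mod_cast hadj ▸ hoff
  have hZ' : (2 : ℝ) ≤ Z.ncard := by exact_mod_cast hZ
  have hpos : (0 : ℝ) < Z.ncard * (Z.ncard - 1) := mul_pos (by linarith) (by linarith)
  have hdens : densSet A Z = (adjPairs A Z).ncard / (Z.ncard * (Z.ncard - 1)) := by
    rw [densSet, Nat.cast_choose_two, Nat.card_coe_set_eq, div_div_div_cancel_right₀ two_ne_zero]
    rfl
  rw [hdens, one_sub_div hpos.ne', ← hsum, add_sub_cancel_left]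

lemma one_sub_densSet_nonneg (hirr : ∀ u, ¬ A u u) (hZ : 2 ≤ Z.ncard) : 0 ≤ 1 - densSet A Z := by
  have hZ' : (1 : ℝ) ≤ Z.ncard := by exact_mod_cast one_le_two.trans hZ
  rw [one_sub_densSet hirr hZ]
  exact div_nonneg (Nat.cast_nonneg _) (mul_nonneg (Nat.cast_nonneg _) (sub_nonneg.mpr hZ'))

lemma rhoMIn_eq_ncard_div (v : V) : rhoMIn A Z v = {u ∈ Z | A u v}.ncard / Fintype.card V := by
  simp only [rhoMIn, and_comm]
  rfl

lemma muSet_sub_rhoMIn (v : V) :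
    muSet Z - rhoMIn A Z v = {u ∈ Z | ¬ A u v}.ncard / Fintype.card V := by
  have hsplit : {u ∈ Z | A u v}.ncard + {u ∈ Z | ¬ A u v}.ncard = Z.ncard :=
    Set.ncard_inter_add_ncard_sdiff_eq_ncard Z {u | A u v}
  rw [muSet, rhoMIn_eq_ncard_div, Nat.card_coe_set_eq, ← hsplit, Nat.cast_add, ← sub_div,
    add_sub_cancel_left]

end Density

section AMGM

lemma pow_mul_pow_le_weighted_mean_pow {k l : ℕ} (hkl : k + l ≠ 0) {p q : ℝ} (hp : 0 ≤ p)
    (hq : 0 ≤ q) : p ^ k * q ^ l ≤ ((k * p + l * q) / (k + l)) ^ (k + l) := by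
  have hkl' : ((k : ℝ) + l) ≠ 0 := by exact_mod_cast hkl
  have amgm := Real.geom_mean_le_arith_mean2_weighted (w₁ := k / (k + l)) (w₂ := l / (k + l))
    (by positivity) (by positivity) hp hq (by rw [← add_div, div_self hkl'])
  calc p ^ k * q ^ l
      = (p ^ ((k : ℝ) / (k + l)) * q ^ ((l : ℝ) / (k + l))) ^ (k + l) := by
        rw [mul_pow, ← Real.rpow_mul_natCast hp, ← Real.rpow_mul_natCast hq, Nat.cast_add,
          div_mul_cancel₀ _ hkl', div_mul_cancel₀ _ hkl', Real.rpow_natCast, Real.rpow_natCast]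
    _ ≤ (k / (k + l) * p + l / (k + l) * q) ^ (k + l) := by gcongr
    _ = ((k * p + l * q) / (k + l)) ^ (k + l) := by ring

lemma pow_mul_pow_le_lam0_mul_add_pow (k l : ℕ) {x y : ℝ} (hx : 0 ≤ x) (hy : 0 ≤ y) :
    x ^ k * y ^ l ≤ lam0 k l * (x + y) ^ (k + l) := by
  rcases k.eq_zero_or_pos with rfl | hk
  · simpa [lam0, div_self] using pow_le_pow_left₀ hy (le_add_of_nonneg_left hx) l
  rcases l.eq_zero_or_pos with rfl | hl
  · simpa [lam0, hk.ne'] using pow_le_pow_left₀ hx (le_add_of_nonneg_right hy) k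
  calc x ^ k * y ^ l = k ^ k * l ^ l * ((x / k) ^ k * (y / l) ^ l) := by
        rw [div_pow, div_pow]
        field_simp
    _ ≤ k ^ k * l ^ l * ((k * (x / k) + l * (y / l)) / (k + l)) ^ (k + l) := by
        gcongr
        exact pow_mul_pow_le_weighted_mean_pow (by omega) (by positivity) (by positivity)
    _ = lam0 k l * (x + y) ^ (k + l) := by
        rw [lam0, mul_div_cancel₀ _ (by positivity), mul_div_cancel₀ _ (by positivity), div_pow]
        ring

end AMGM

section Main

variable {V : Type*} [Fintype V] {A : V → V → Prop} {Z : Set V}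

lemma ncard_centeredStars_le {k l : ℕ} (hk : 2 ≤ k) (hl : 2 ≤ l) (hirr : ∀ u, ¬ A u u)
    (hZ : 2 ≤ Z.ncard) (v : V) :
    ((centeredStars k l A Z v).ncard : ℝ) ≤
      (1 - densSet A Z) * {u ∈ Z | ¬ A u v}.ncard ^ k * {u ∈ Z | A u v}.ncard ^ l := by
  have hcount : ((centeredStars k l A Z v).ncard : ℝ) * Z.ncard ^ 2 ≤
      {u ∈ Z | ¬ A u v}.ncard ^ k * {u ∈ Z | A u v}.ncard ^ l * (nonadjPairs A Z).ncard := by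
    exact_mod_cast ncard_centeredStars_mul_ncard_sq_le hk hl
  have hZ' : (2 : ℝ) ≤ Z.ncard := by exact_mod_cast hZ
  have hpos : (0 : ℝ) < Z.ncard * (Z.ncard - 1) := mul_pos (by linarith) (by linarith)
  rw [one_sub_densSet hirr hZ, mul_assoc, div_mul_eq_mul_div, le_div_iff₀ hpos]
  calc ((centeredStars k l A Z v).ncard : ℝ) * (Z.ncard * (Z.ncard - 1))
      ≤ (centeredStars k l A Z v).ncard * Z.ncard ^ 2 := by
        rw [sq]
        gcongr
        exact sub_le_self _ zero_le_one
    _ ≤ _ := hcount.trans_eq (mul_comm _ _)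

theorem sCondOn_leaves_mem_le {k l : ℕ} (hk : 2 ≤ k) (hl : 2 ≤ l) (hirr : ∀ u, ¬ A u u)
    (hZ : 2 ≤ Z.ncard) (v : V) :
    sCondOn k l A v (fun φ ↦ ∀ a : Fin (k + l + 1), a ≠ 0 → φ a ∈ Z) ≤
      (1 - densSet A Z) * (muSet Z - rhoMIn A Z v) ^ k * rhoMIn A Z v ^ l := by
  calc sCondOn k l A v (fun φ ↦ ∀ a : Fin (k + l + 1), a ≠ 0 → φ a ∈ Z)
      = (centeredStars k l A Z v).ncard / (Fintype.card V : ℝ) ^ (k + l) := rfl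
    _ ≤ (1 - densSet A Z) * {u ∈ Z | ¬ A u v}.ncard ^ k * {u ∈ Z | A u v}.ncard ^ l /
          (Fintype.card V : ℝ) ^ (k + l) := by
        gcongr
        exact ncard_centeredStars_le hk hl hirr hZ v
    _ = (1 - densSet A Z) * (muSet Z - rhoMIn A Z v) ^ k * rhoMIn A Z v ^ l := by
        rw [muSet_sub_rhoMIn, rhoMIn_eq_ncard_div]
        ring

theorem one_sub_densSet_mul_pow_mul_pow_le (k l : ℕ) (hirr : ∀ u, ¬ A u u) (hZ : 2 ≤ Z.ncard)
    (v : V) :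
    (1 - densSet A Z) * (muSet Z - rhoMIn A Z v) ^ k * rhoMIn A Z v ^ l ≤
      (1 - densSet A Z) * lam0 k l * muSet Z ^ (k + l) := by
  have hout : 0 ≤ muSet Z - rhoMIn A Z v := by
    rw [muSet_sub_rhoMIn]
    positivity
  have hin : 0 ≤ rhoMIn A Z v := by
    rw [rhoMIn_eq_ncard_div]
    positivity
  have amgm := pow_mul_pow_le_lam0_mul_add_pow k l hout hin
  rw [sub_add_cancel] at amgm
  rw [mul_assoc, mul_assoc]
  exact mul_le_mul_of_nonneg_left amgm (one_sub_densSet_nonneg hirr hZ)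

theorem stmt17_general {k l : ℕ} (hk : 2 ≤ k) (hl : 2 ≤ l) (hirr : ∀ u, ¬ A u u)
    (hZ : 2 ≤ Z.ncard) (v : V) :
    sCondOn k l A v (fun φ ↦ ∀ a : Fin (k + l + 1), a ≠ 0 → φ a ∈ Z)
        ≤ (1 - densSet A Z) * (muSet Z - rhoMIn A Z v) ^ k * rhoMIn A Z v ^ l ∧
    (1 - densSet A Z) * (muSet Z - rhoMIn A Z v) ^ k * rhoMIn A Z v ^ l
        ≤ (1 - densSet A Z) * lam0 k l * muSet Z ^ (k + l) :=
  ⟨sCondOn_leaves_mem_le hk hl hirr hZ v, one_sub_densSet_mul_pow_mul_pow_le k l hirr hZ v⟩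

end Main

theorem stmt17 (k l : ℕ) (hl : 2 ≤ l) (hlk : l ≤ k) (hm : 6 ≤ k + l)
    (V : Type) [Fintype V] (A : V → V → Prop)
    (hirr : Irreflexive A) (hopp : ∀ u v, A u v → ¬ A v u) (hn : 1 ≤ Fintype.card V)
    (Z : Set V) (hZ : 2 ≤ Nat.card Z) (v : V) (hv : v ∉ Z) :
    sCondOn k l A v (fun φ => ∀ a : Fin (k + l + 1), a ≠ 0 → φ a ∈ Z)
        ≤ (1 - densSet A Z) * (muSet Z - rhoMIn A Z v) ^ k * rhoMIn A Z v ^ l ∧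
    (1 - densSet A Z) * (muSet Z - rhoMIn A Z v) ^ k * rhoMIn A Z v ^ l
        ≤ (1 - densSet A Z) * lam0 k l * muSet Z ^ (k + l) := by
  exact stmt17_general (hl.trans hlk) hl hirr hZ v
end

section
/- Suppose s(v) ≥ OPT(k,l) for every vertex v of G, and suppose X ≠ ∅ and Y ≠ ∅. Then ((k−1)^{k−1} l^l/(m−1)^{m−1}) · (1−d) · α^m · (1−α) ≥ s₂(G) + s_X(G). -/
open scoped BigOperators

/-
Write `m = k + l`. A vertex in the role of the center sees `k` out-neighbours and `l`
in-neighbours, and fixing one leaf leaves the non-neighbourhood of that leaf for all the others, so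
weighted AM-GM bounds `(m + 1) s(v)` by `λ₀ (ρ^m + e m ρ (1 - ρ)^(m - 1))` with `ρ = ρ(v)`. Taking
`α = 1 / (m + 1)` in `OPT(k, l)` shows that the assumption on `s` gives `(m + 1) s(v) ≥ λ₀ / e`, and
together these push `ρ(x) ≥ 1/2` up to `ρ(x) ≥ 2/3` for `x ∈ X`. Hence a star with a leaf in `X` has
its other leaves in a set of measure at most `1/3`; such stars are too few, so those centered at `x`
must come mostly from leaves in `Y`, and this forces `(m - 1) ρ⁻_Y(x) ≥ α`.

A star counted by `s₂ + s_X` has all leaves in `X`. If `x` is its first out-leaf, the center is an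
in-neighbour of `x` and the other leaves are non-neighbours of `x` in `X`, which gives at most
`κ (ρ⁻_X(x) + ρ⁻_Y(x)) (α - ρ⁻_X(x))^(m - 1)` with `κ` the constant `λ₀` of `S_{k-1,l}`. Because
`(m - 1) ρ⁻_Y(x) ≥ α`, Bernoulli's inequality shows that this is largest at `ρ⁻_X(x) = 0`, and
averaging `κ ρ⁻_Y(x) α^(m - 1)` over `x ∈ X` produces the factor `(1 - d)(1 - α)`.
-/

section Density

variable {α β : Type*} [Fintype α]

theorem muSet_nonneg (B : Set α) : 0 ≤ muSet B := by
  unfold muSet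
  positivity

theorem muSet_mono {B C : Set α} (h : B ⊆ C) : muSet B ≤ muSet C := by
  unfold muSet
  gcongr
  exact Nat.card_mono C.toFinite h

theorem muSet_union {B C : Set α} (h : Disjoint B C) : muSet (B ∪ C) = muSet B + muSet C := by
  simp only [muSet, ← add_div, Nat.card_coe_set_eq]
  exact_mod_cast congrArg (fun N : ℕ => (N : ℝ) / Fintype.card α) (Set.ncard_union_eq h)

theorem muSet_union_le (B C : Set α) : muSet (B ∪ C) ≤ muSet B + muSet C := by
  simp only [muSet, ← add_div, Nat.card_coe_set_eq]
  gcongr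
  exact_mod_cast Set.ncard_union_le B C

theorem muSet_iUnion_le {ι : Type*} [Fintype ι] (S : ι → Set α) :
    muSet (⋃ i, S i) ≤ ∑ i, muSet (S i) := by
  simp only [muSet, ← Finset.sum_div, Nat.card_coe_set_eq]
  gcongr
  exact_mod_cast Set.ncard_iUnion_le_of_fintype S

theorem muSet_univ [Nonempty α] : muSet (Set.univ : Set α) = 1 := by
  simp [muSet]

theorem muSet_le_one [Nonempty α] (B : Set α) : muSet B ≤ 1 :=
  (muSet_mono (Set.subset_univ B)).trans_eq muSet_univ

theorem muSet_compl [Nonempty α] (B : Set α) : muSet Bᶜ = 1 - muSet B := by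
  rw [← muSet_univ (α := α), ← Set.union_compl_self B, muSet_union disjoint_compl_right]
  ring

theorem muSet_singleton (a : α) : muSet {a} = 1 / (Fintype.card α : ℝ) := by
  simp [muSet]

theorem muSet_pos {B : Set α} (h : B.Nonempty) : 0 < muSet B := by
  obtain ⟨a, ha⟩ := h
  have : Nonempty α := ⟨a⟩
  calc 0 < muSet {a} := by rw [muSet_singleton]; positivity
    _ ≤ muSet B := muSet_mono (Set.singleton_subset_iff.2 ha)

theorem muSet_univ_pi {ι : Type*} [Fintype ι] [DecidableEq ι] (B : ι → Set α) :
    muSet (Set.univ.pi B) = ∏ i, muSet (B i) := by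
  have hcard : Nat.card (Set.univ.pi B) = ∏ i, Nat.card (B i) := by
    rw [Nat.card_congr (Equiv.Set.univPi B), Nat.card_pi]
  simp [muSet, hcard, Finset.prod_div_distrib]

theorem muSet_eq_sum_fiber [Fintype β] (S : Set α) (f : α → β) :
    muSet S = ∑ b, muSet {x ∈ S | f x = b} := by
  classical
  simp only [muSet, ← Finset.sum_div, Nat.card_eq_fintype_card, Fintype.card_subtype]
  rw [Finset.card_eq_sum_card_fiberwise (f := f) (t := Finset.univ) fun x _ => by simp]
  simp [Finset.filter_filter]

theorem muSet_le_finsum_fiber [Finite β] {S : Set α} {f : α → β} {C : Set β} {g : β → ℝ}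
    (hC : ∀ x ∈ S, f x ∈ C) (hg : ∀ b ∈ C, muSet {x ∈ S | f x = b} ≤ g b) :
    muSet S ≤ ∑ᶠ b ∈ C, g b := by
  have := Fintype.ofFinite β
  rw [muSet_eq_sum_fiber S f, finsum_mem_def, finsum_eq_sum_of_fintype]
  refine Finset.sum_le_sum fun b _ => ?_
  by_cases hb : b ∈ C
  · simpa only [Set.indicator_of_mem hb] using hg b hb
  · have hempty : {x ∈ S | f x = b} = ∅ :=
      Set.eq_empty_of_forall_notMem fun x hx => hb (hx.2 ▸ hC x hx.1)
    simp [hempty, hb, muSet]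

theorem muSet_le_mul_of_fiber_le [Fintype β] {S : Set α} {f : α → β} {C : Set β} {t : ℝ}
    (hC : ∀ x ∈ S, f x ∈ C)
    (ht : ∀ b ∈ C, muSet {x ∈ S | f x = b} ≤ t / Fintype.card β) :
    muSet S ≤ muSet C * t := by
  classical
  refine (muSet_le_finsum_fiber hC ht).trans_eq ?_
  rw [finsum_mem_eq_toFinset_sum, Finset.sum_const, nsmul_eq_mul, muSet, Set.toFinset_card,
    Nat.card_eq_fintype_card]
  ring

end Density

section Analysis

theorem add_one_pow_le_exp_one_mul_pow (n : ℕ) :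
    ((n : ℝ) + 1) ^ n ≤ Real.exp 1 * (n : ℝ) ^ n := by
  rcases n.eq_zero_or_pos with rfl | hn
  · simp
  · calc ((n : ℝ) + 1) ^ n = (1 + (n : ℝ)⁻¹) ^ n * (n : ℝ) ^ n := by
          rw [← mul_pow]
          field_simp
      _ ≤ Real.exp 1 * (n : ℝ) ^ n := by
          gcongr
          exact Real.one_add_inv_pow_le_exp

theorem natCast_mul_pow_le {r : ℝ} (h0 : 0 ≤ r) (h1 : r ≤ 1 / 2) {N m : ℕ} (hN : 1 ≤ N)
    (hm : N ≤ m) : m * r ^ m ≤ N * r ^ N := by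
  induction m, hm using Nat.le_induction with
  | base => rfl
  | succ n hn ih =>
    have hn1 : (1 : ℝ) ≤ n := by exact_mod_cast hN.trans hn
    calc ((n + 1 : ℕ) : ℝ) * r ^ (n + 1) = ((n : ℝ) + 1) * r * r ^ n := by push_cast; ring
      _ ≤ n * r ^ n := by gcongr; nlinarith
      _ ≤ N * r ^ N := ih

theorem two_thirds_le_of_inv_exp_le {m : ℕ} (hm : 6 ≤ m) {r : ℝ} (hr : 1 / 2 ≤ r)
    (h : 1 / Real.exp 1 ≤ r ^ m + Real.exp 1 * m * (r * (1 - r) ^ (m - 1))) : 2 / 3 ≤ r := by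
  by_contra! hlt
  have he := Real.exp_one_lt_d9
  have hmain : r ^ m ≤ (2 / 3) ^ 6 :=
    calc r ^ m ≤ (2 / 3) ^ m := by gcongr
      _ ≤ (2 / 3) ^ 6 := pow_le_pow_of_le_one (by norm_num) (by norm_num) hm
  have hleaf : r * (1 - r) ^ (m - 1) ≤ (1 / 2) ^ m := by
    obtain ⟨j, rfl⟩ : ∃ j, m = j + 2 := ⟨m - 2, by lia⟩
    have hpow : (1 - r) ^ j ≤ (1 / 2) ^ j :=
      pow_le_pow_left₀ (by linarith) (by linarith) j
    calc r * (1 - r) ^ (j + 1) = (1 - r) ^ j * (r * (1 - r)) := by ring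
      _ ≤ (1 / 2) ^ j * (1 / 2) ^ 2 := by
          gcongr
          · nlinarith
          · nlinarith [sq_nonneg (r - 1 / 2)]
      _ = (1 / 2) ^ (j + 2) := by ring
  have hnum : m * (1 / 2 : ℝ) ^ m ≤ 6 / 64 :=
    (natCast_mul_pow_le (by norm_num) le_rfl (by norm_num) hm).trans_eq (by norm_num)
  have hrest : Real.exp 1 * m * (r * (1 - r) ^ (m - 1)) ≤ 2.7182818286 * (6 / 64) :=
    calc Real.exp 1 * m * (r * (1 - r) ^ (m - 1))
        ≤ Real.exp 1 * (m * (1 / 2) ^ m) := by rw [mul_assoc]; gcongr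
      _ ≤ 2.7182818286 * (6 / 64) := by gcongr
  have hinv : 1 / 2.7182818286 < 1 / Real.exp 1 :=
    one_div_lt_one_div_of_lt (Real.exp_pos 1) he
  norm_num at hmain hrest hinv h
  linarith

theorem one_add_mul_mul_one_sub_pow_le_one {x : ℝ} (h0 : 0 ≤ x) (h1 : x ≤ 1) (j : ℕ) :
    (1 + j * x) * (1 - x) ^ j ≤ 1 :=
  have : 0 ≤ 1 - x := sub_nonneg.2 h1
  calc (1 + j * x) * (1 - x) ^ j ≤ (1 + x) ^ j * (1 - x) ^ j := by
        gcongr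
        exact one_add_mul_le_pow (by linarith) j
    _ = (1 - x ^ 2) ^ j := by rw [← mul_pow]; ring
    _ ≤ 1 := pow_le_one₀ (by nlinarith) (by nlinarith)

theorem add_mul_sub_pow_le {j : ℕ} {a g δ : ℝ} (ha : 0 < a) (hg : a ≤ j * g) (h0 : 0 ≤ δ)
    (h1 : δ ≤ a) : (δ + g) * (a - δ) ^ j ≤ g * a ^ j := by
  have hg0 : 0 < g := pos_of_mul_pos_right (ha.trans_le hg) j.cast_nonneg
  have : 0 ≤ a - δ := sub_nonneg.2 h1
  have hδ : δ + g ≤ g * (1 + j * (δ / a)) := by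
    have : δ ≤ j * g * (δ / a) :=
      calc δ = a * (δ / a) := by field_simp
        _ ≤ j * g * (δ / a) := by gcongr
    linarith
  calc (δ + g) * (a - δ) ^ j ≤ g * (1 + j * (δ / a)) * (a - δ) ^ j := by gcongr
    _ = g * a ^ j * ((1 + j * (δ / a)) * (1 - δ / a) ^ j) := by
        rw [show a - δ = a * (1 - δ / a) by field_simp, mul_pow]
        ring
    _ ≤ g * a ^ j := mul_le_of_le_one_right (by positivity)
        (one_add_mul_mul_one_sub_pow_le_one (by positivity) ((div_le_one ha).2 h1) j)

end Analysis

section StarConstants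

variable (k l : ℕ)

theorem lam0_pos : 0 < lam0 k l := by
  have hpow (n : ℕ) : (0 : ℝ) < (n : ℝ) ^ n := by exact_mod_cast Nat.pow_self_pos
  have hkl := hpow (k + l)
  push_cast at hkl
  exact div_pos (mul_pos (hpow k) (hpow l)) hkl

theorem lam0_comm : lam0 k l = lam0 l k := by
  unfold lam0
  rw [add_comm k l, add_comm (k : ℝ), mul_comm]

theorem lam0_self : lam0 k k = 1 / 2 ^ (2 * k) := by
  have hk : (0 : ℝ) < (k : ℝ) ^ k := by exact_mod_cast Nat.pow_self_pos
  rw [lam0, ← two_mul, ← two_mul, mul_pow, two_mul k, pow_add (k : ℝ)]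
  field_simp

variable {k l}

theorem lam0_eq_pow_mul_pow (h : 0 < k + l) :
    lam0 k l = ((k : ℝ) / (k + l)) ^ k * (1 - (k : ℝ) / (k + l)) ^ l := by
  have h' : (0 : ℝ) < (k : ℝ) + l := by exact_mod_cast h
  rw [one_sub_div h'.ne', add_sub_cancel_left, div_pow, div_pow, div_mul_div_comm, ← pow_add, lam0]

theorem lam0_sub_one_left (hk : 1 ≤ k) :
    lam0 (k - 1) l = ((k : ℝ) - 1) ^ (k - 1) * (l : ℝ) ^ l / ((k : ℝ) + l - 1) ^ (k + l - 1) := by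
  rw [lam0, Nat.cast_sub hk, Nat.cast_one, sub_add_eq_add_sub, tsub_add_eq_add_tsub hk]

theorem pow_mul_pow_le_lam0_mul_pow {a b t : ℝ} (ha : 0 ≤ a) (hb : 0 ≤ b) (hab : a + b ≤ t) :
    a ^ k * b ^ l ≤ lam0 k l * t ^ (k + l) := by
  rcases k.eq_zero_or_pos with rfl | hk
  · have hlam : lam0 0 l = 1 := by
      have : (l : ℝ) ^ l ≠ 0 := by exact_mod_cast Nat.pow_self_pos.ne'
      simp [lam0, this]
    rw [hlam, pow_zero, one_mul, one_mul, zero_add]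
    gcongr
    linarith
  rcases l.eq_zero_or_pos with rfl | hl
  · have hlam : lam0 k 0 = 1 := by
      have : (k : ℝ) ^ k ≠ 0 := by exact_mod_cast Nat.pow_self_pos.ne'
      simp [lam0, this]
    rw [hlam, pow_zero, one_mul, mul_one, add_zero]
    gcongr
    linarith
  have hamgm := Real.geom_mean_le_arith_mean2_weighted
    (w₁ := (k : ℝ) / (k + l)) (w₂ := (l : ℝ) / (k + l)) (p₁ := a / k) (p₂ := b / l)
    (by positivity) (by positivity) (by positivity) (by positivity) (by field_simp)
  have hpow := pow_le_pow_left₀ (by positivity) hamgm (k + l)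
  have hgeom : ((a / k) ^ ((k : ℝ) / (k + l)) * (b / l) ^ ((l : ℝ) / (k + l))) ^ (k + l)
      = (a / k) ^ k * (b / l) ^ l := by
    rw [mul_pow, ← Real.rpow_mul_natCast (by positivity), ← Real.rpow_mul_natCast (by positivity),
      Nat.cast_add, div_mul_cancel₀ _ (by positivity), div_mul_cancel₀ _ (by positivity),
      Real.rpow_natCast, Real.rpow_natCast]
  have harith : (k : ℝ) / (k + l) * (a / k) + (l : ℝ) / (k + l) * (b / l) = (a + b) / (k + l) := by
    field_simp
  rw [hgeom, harith] at hpow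
  calc a ^ k * b ^ l = (k : ℝ) ^ k * (l : ℝ) ^ l * ((a / k) ^ k * (b / l) ^ l) := by
        rw [div_pow, div_pow]
        field_simp
    _ ≤ (k : ℝ) ^ k * (l : ℝ) ^ l * (t / (k + l)) ^ (k + l) := by
        gcongr
        exact hpow.trans (by gcongr)
    _ = lam0 k l * t ^ (k + l) := by
        rw [lam0, div_pow]
        ring

variable (k l) in
theorem natCast_mul_lam0_sub_one_le :
    k * lam0 (k - 1) l ≤ Real.exp 1 * ((k : ℝ) + l) * lam0 k l := by
  cases k with
  | zero =>
    have := lam0_pos 0 l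
    rw [Nat.cast_zero, zero_mul]
    positivity
  | succ n =>
    have hm := add_one_pow_le_exp_one_mul_pow (n + l)
    have hn : ((n : ℝ) + 1) * (n : ℝ) ^ n ≤ ((n : ℝ) + 1) ^ (n + 1) := by
      rw [pow_succ']
      gcongr
      linarith
    have hpos : (0 : ℝ) < ((n : ℝ) + l) ^ (n + l) := by exact_mod_cast Nat.pow_self_pos
    simp only [lam0, Nat.add_sub_cancel, ← mul_div_assoc]
    push_cast at hm ⊢
    rw [div_le_div_iff₀ hpos (by positivity), show n + 1 + l = n + l + 1 by ring, pow_succ]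
    calc ((n : ℝ) + 1) * ((n : ℝ) ^ n * (l : ℝ) ^ l) *
          (((n : ℝ) + 1 + l) ^ (n + l) * ((n : ℝ) + 1 + l))
        = ((n : ℝ) + 1) * (n : ℝ) ^ n * (l : ℝ) ^ l * ((n : ℝ) + l + 1) ^ (n + l)
            * ((n : ℝ) + 1 + l) := by ring
      _ ≤ ((n : ℝ) + 1) ^ (n + 1) * (l : ℝ) ^ l * (Real.exp 1 * ((n : ℝ) + l) ^ (n + l))
            * ((n : ℝ) + 1 + l) := by gcongr
      _ = _ := by ring

theorem lam0_mul_le_OPT {a : ℝ} (h0 : 0 ≤ a) (h1 : a ≤ 1 / 2) (hk : 1 ≤ k) :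
    lam0 k l * (a * (1 - a) ^ (k + l)) ≤ OPT k l := by
  have h1a : 0 ≤ 1 - a := by linarith
  unfold OPT
  split_ifs with h
  · subst h
    rw [lam0_self, ← two_mul]
    have hbdd := (isCompact_Icc (a := (0 : ℝ)) (b := 1)).bddAbove_image
      (f := fun a => a * (1 - a) ^ (2 * k) + (1 - a) * a ^ (2 * k)) (by fun_prop)
    simp only [Set.image, eq_comm] at hbdd
    gcongr
    refine le_trans ?_ (le_csSup hbdd ⟨a, ⟨h0, by linarith⟩, rfl⟩)
    exact le_add_of_nonneg_right (by positivity)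
  · have hd : 0 ≤ 1 - (k : ℝ) / (k + l) :=
      sub_nonneg.2 (div_le_one_of_le₀ (by simp) (by positivity))
    obtain ⟨M, hM⟩ := ((isCompact_Icc (a := (0 : ℝ)) (b := 1 / 2)).prod
      (isCompact_Icc (a := (0 : ℝ)) (b := (k : ℝ) / (k + l)))).bddAbove_image
      (f := fun p => p.1 * (1 - p.1) ^ (k + l) * p.2 ^ k * (1 - p.2) ^ l
        + lam0 (k - 1) l * (1 - p.1) * p.1 ^ (k + l) * (1 - p.2)) (by fun_prop)
    rw [← lam0_sub_one_left hk]
    refine le_trans ?_ (le_csSup ⟨M, ?_⟩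
      ⟨a, ⟨h0, h1⟩, k / (k + l), ⟨by positivity, le_rfl⟩, rfl⟩)
    · have hpos := lam0_pos (k - 1) l
      calc lam0 k l * (a * (1 - a) ^ (k + l))
          = a * (1 - a) ^ (k + l) * ((k : ℝ) / (k + l)) ^ k * (1 - (k : ℝ) / (k + l)) ^ l := by
            rw [lam0_eq_pow_mul_pow (by lia)]
            ring
        _ ≤ _ := le_add_of_nonneg_right (by positivity)
    · rintro _ ⟨b, hb, d, hd, rfl⟩
      exact hM ⟨(b, d), ⟨hb, hd⟩, rfl⟩

theorem lam0_div_exp_one_le_OPT (hk : 1 ≤ k) :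
    lam0 k l / Real.exp 1 ≤ ((k : ℝ) + l + 1) * OPT k l := by
  have hpow : 1 / Real.exp 1 ≤ (1 - 1 / ((k : ℝ) + l + 1)) ^ (k + l) := by
    have h := add_one_pow_le_exp_one_mul_pow (k + l)
    push_cast at h
    rw [one_sub_div (by positivity), add_sub_cancel_right, div_pow,
      div_le_div_iff₀ (Real.exp_pos 1) (by positivity)]
    linarith
  have hkl' : (1 : ℝ) ≤ (k : ℝ) + l := by exact_mod_cast hk.trans (k.le_add_right l)
  calc lam0 k l / Real.exp 1 = lam0 k l * (1 / Real.exp 1) := by ring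
    _ ≤ lam0 k l * (1 - 1 / ((k : ℝ) + l + 1)) ^ (k + l) := by
        gcongr
        exact (lam0_pos k l).le
    _ = ((k : ℝ) + l + 1)
          * (lam0 k l * (1 / ((k : ℝ) + l + 1) * (1 - 1 / ((k : ℝ) + l + 1)) ^ (k + l))) := by
        field_simp
    _ ≤ ((k : ℝ) + l + 1) * OPT k l := by
        gcongr
        exact lam0_mul_le_OPT (by positivity) (by gcongr; linarith) hk

end StarConstants

section Degrees

variable {V : Type*} [Fintype V] {A : V → V → Prop}

theorem rhoPIn_add_rhoMIn (hopp : ∀ u v, A u v → ¬A v u) (Z : Set V) (v : V) :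
    rhoPIn A Z v + rhoMIn A Z v = rhoIn A Z v := by
  have hunion : {u | (A v u ∨ A u v) ∧ u ∈ Z} = {u | A v u ∧ u ∈ Z} ∪ {u | A u v ∧ u ∈ Z} := by
    ext u
    exact or_and_right
  have hdisj : Disjoint {u | A v u ∧ u ∈ Z} {u | A u v ∧ u ∈ Z} :=
    Set.disjoint_left.2 fun u hout hin => hopp v u hout.1 hin.1
  exact ((congrArg muSet hunion).trans (muSet_union hdisj)).symm

variable (A)

theorem rhoPIn_nonneg (Z : Set V) (v : V) : 0 ≤ rhoPIn A Z v := muSet_nonneg _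

theorem rhoMIn_nonneg (Z : Set V) (v : V) : 0 ≤ rhoMIn A Z v := muSet_nonneg _

theorem rhoIn_univ (v : V) : rhoIn A Set.univ v = rho A v := by
  simp [rhoIn, rho]

theorem rho_le_one (v : V) : rho A v ≤ 1 :=
  have : Nonempty V := ⟨v⟩
  muSet_le_one {u | A v u ∨ A u v}

theorem rho_mul_one_sub_rho_pow_le {v : V} {T : ℝ} (hT : 1 - rho A v ≤ T) (j : ℕ) :
    rho A v * (1 - rho A v) ^ j ≤ T ^ j := by
  have hsub : 0 ≤ 1 - rho A v := sub_nonneg.2 (rho_le_one A v)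
  exact (mul_le_of_le_one_left (pow_nonneg hsub j) (rho_le_one A v)).trans
    (pow_le_pow_left₀ hsub hT j)

theorem rhoIn_le_muSet (Z : Set V) (v : V) : rhoIn A Z v ≤ muSet Z :=
  muSet_mono fun _ hu => hu.2

theorem rhoMIn_le_muSet (Z : Set V) (v : V) : rhoMIn A Z v ≤ muSet Z :=
  muSet_mono fun _ hu => hu.2

theorem rhoMIn_univ (Z : Set V) (v : V) :
    rhoMIn A Set.univ v = rhoMIn A Z v + rhoMIn A Zᶜ v := by
  have hunion : {u | A u v ∧ u ∈ Set.univ} = {u | A u v ∧ u ∈ Z} ∪ {u | A u v ∧ u ∈ Zᶜ} := by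
    ext u
    simp only [Set.mem_ofPred_eq, Set.mem_union, Set.mem_univ, Set.mem_compl_iff]
    tauto
  have hdisj : Disjoint {u | A u v ∧ u ∈ Z} {u | A u v ∧ u ∈ Zᶜ} :=
    Set.disjoint_left.2 fun u hZ hZc => hZc.2 hZ.2
  exact (congrArg muSet hunion).trans (muSet_union hdisj)

/-- The vertices of `Z` that are not adjacent to `v`, among which lie the other leaves of any star
with leaf `v` and all leaves in `Z`; the vertex `v` itself is not excluded. -/
def nonNbhd (A : V → V → Prop) (Z : Set V) (v : V) : Set V := {u ∈ Z | ¬(A v u ∨ A u v)}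

theorem muSet_nonNbhd (Z : Set V) (v : V) : muSet (nonNbhd A Z v) = muSet Z - rhoIn A Z v := by
  have hunion : Z = nonNbhd A Z v ∪ {u | (A v u ∨ A u v) ∧ u ∈ Z} := by
    ext u
    simp only [nonNbhd, Set.mem_union, Set.mem_ofPred_eq]
    tauto
  have hdisj : Disjoint (nonNbhd A Z v) {u | (A v u ∨ A u v) ∧ u ∈ Z} :=
    Set.disjoint_left.2 fun u hnon hadj => hnon.2 hadj.1
  exact eq_sub_of_add_eq ((congrArg muSet hunion).trans (muSet_union hdisj)).symm

end Degrees

section Stars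

variable {k l : ℕ} {V : Type*} {A : V → V → Prop}

/-- The vertices allowed for leaf `z` of a star centered at `c`. Leaves are indexed by
`Fin (k + l)`, leaf `z` being the vertex `z.succ` of the star, so that the out-leaves are
`Fin.castAdd l i` and the in-leaves are `Fin.natAdd k i`. -/
def leafNbhd (A : V → V → Prop) (c : V) (z : Fin (k + l)) : Set V :=
  Fin.addCases (fun _ => {u | A c u}) (fun _ => {u | A u c}) z

/-- The copies of the star all of whose leaves lie in `Z`. With `Z = X` these are the stars of
type 2 or type `X`. -/
def starsWithLeavesIn (k l : ℕ) (A : V → V → Prop) (Z : Set V) : Set (Fin (k + l + 1) → V) :=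
  {φ | IsStarEmb k l A φ ∧ ∀ z : Fin (k + l), φ z.succ ∈ Z}

theorem mem_starsWithLeavesIn_univ {φ : Fin (k + l + 1) → V} :
    φ ∈ starsWithLeavesIn k l A Set.univ ↔ IsStarEmb k l A φ :=
  and_iff_left fun _ => Set.mem_univ _

/-- The constant `λ₀` of the star that is left when the leaf `z` is removed; it bounds the density of
stars with `z` and the center fixed. -/
noncomputable def leafLam (k l : ℕ) (z : Fin (k + l)) : ℝ :=
  Fin.addCases (fun _ => lam0 (k - 1) l) (fun _ => lam0 k (l - 1)) z

@[simp]
theorem leafNbhd_castAdd (c : V) (i : Fin k) : leafNbhd A c (Fin.castAdd l i) = {u | A c u} := by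
  simp only [leafNbhd, Fin.addCases_left]

@[simp]
theorem leafNbhd_natAdd (c : V) (i : Fin l) : leafNbhd A c (Fin.natAdd k i) = {u | A u c} := by
  simp only [leafNbhd, Fin.addCases_right]

@[simp]
theorem leafLam_castAdd (i : Fin k) : leafLam k l (Fin.castAdd l i) = lam0 (k - 1) l := by
  simp only [leafLam, Fin.addCases_left]

@[simp]
theorem leafLam_natAdd (i : Fin l) : leafLam k l (Fin.natAdd k i) = lam0 k (l - 1) := by
  simp only [leafLam, Fin.addCases_right]

theorem leafLam_pos (z : Fin (k + l)) : 0 < leafLam k l z := by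
  cases z using Fin.addCases <;> simp [lam0_pos]

theorem starArc_zero_left (i : Fin k) : StarArc k l 0 (Fin.castAdd l i).succ := by
  simp [StarArc]

theorem starArc_zero_right (i : Fin l) : StarArc k l (Fin.natAdd k i).succ 0 := by
  simp [StarArc]

theorem not_starArc_succ_succ_s18 (z w : Fin (k + l)) : ¬StarArc k l z.succ w.succ := by
  simp [StarArc]

theorem IsStarEmb.mem_leafNbhd {φ : Fin (k + l + 1) → V} (hφ : IsStarEmb k l A φ)
    (z : Fin (k + l)) : φ z.succ ∈ leafNbhd A (φ 0) z := by
  cases z using Fin.addCases with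
  | left i => simpa using (hφ.2 _ _).1 (starArc_zero_left i)
  | right i => simpa using (hφ.2 _ _).1 (starArc_zero_right i)

theorem IsStarEmb.mem_nonNbhd {φ : Fin (k + l + 1) → V} (hφ : IsStarEmb k l A φ) {Z : Set V}
    {z w : Fin (k + l)} (hw : φ w.succ ∈ Z) : φ w.succ ∈ nonNbhd A Z (φ z.succ) :=
  ⟨hw, not_or.2 ⟨fun h => not_starArc_succ_succ_s18 z w ((hφ.2 _ _).2 h),
    fun h => not_starArc_succ_succ_s18 w z ((hφ.2 _ _).2 h)⟩⟩

variable [Fintype V]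

theorem muSet_le_prod_leaves {n : ℕ} {S : Set (Fin (n + 1) → V)} {c : V} {B : Fin n → Set V}
    (hc : ∀ φ ∈ S, φ 0 = c) (hB : ∀ φ ∈ S, ∀ z : Fin n, φ z.succ ∈ B z) :
    muSet S ≤ (∏ z, muSet (B z)) / Fintype.card V := by
  have hsub : S ⊆ Set.univ.pi (Fin.cons {c} B : Fin (n + 1) → Set V) := by
    intro φ hφ z _
    cases z using Fin.cases with
    | zero => exact hc φ hφ
    | succ z => exact hB φ hφ z
  refine (muSet_mono hsub).trans_eq ?_
  rw [muSet_univ_pi, Fin.prod_univ_succ]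
  simp only [Fin.cons_zero, Fin.cons_succ, muSet_singleton]
  ring

theorem muSet_leafNbhd_castAdd (N : Set V) (c : V) (i : Fin k) :
    muSet (leafNbhd A c (Fin.castAdd l i) ∩ N) = rhoPIn A N c := by
  rw [leafNbhd_castAdd]
  rfl

theorem muSet_leafNbhd_natAdd (N : Set V) (c : V) (i : Fin l) :
    muSet (leafNbhd A c (Fin.natAdd k i) ∩ N) = rhoMIn A N c := by
  rw [leafNbhd_natAdd]
  rfl

theorem muSet_center_le (k l : ℕ) (A : V → V → Prop) (Z : Set V) (c : V) :
    muSet {φ ∈ starsWithLeavesIn k l A Z | φ 0 = c}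
      ≤ rhoPIn A Z c ^ k * rhoMIn A Z c ^ l / Fintype.card V := by
  refine (muSet_le_prod_leaves (B := fun z => leafNbhd A c z ∩ Z) (fun φ hφ => hφ.2)
    fun φ hφ z => ⟨hφ.2 ▸ hφ.1.1.mem_leafNbhd z, hφ.1.2 z⟩).trans_eq ?_
  simp only [Fin.prod_univ_add, muSet_leafNbhd_castAdd, muSet_leafNbhd_natAdd, Finset.prod_const,
    Finset.card_univ, Fintype.card_fin]

theorem prod_erase_muSet_leafNbhd_le (hopp : ∀ u v, A u v → ¬A v u) (N : Set V) (c : V)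
    (z : Fin (k + l)) :
    ∏ w ∈ Finset.univ.erase z, muSet (leafNbhd A c w ∩ N)
      ≤ leafLam k l z * muSet N ^ (k + l - 1) := by
  have hdeg : rhoPIn A N c + rhoMIn A N c ≤ muSet N :=
    (rhoPIn_add_rhoMIn hopp N c).trans_le (rhoIn_le_muSet A N c)
  have herase : ∏ w ∈ Finset.univ.erase z, muSet (leafNbhd A c w ∩ N)
      = ∏ w, if w = z then 1 else muSet (leafNbhd A c w ∩ N) := by
    simp [Finset.prod_ite, Finset.filter_ne']
  rw [herase, Fin.prod_univ_add]
  simp only [muSet_leafNbhd_castAdd, muSet_leafNbhd_natAdd]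
  cases z using Fin.addCases with
  | left i =>
    have hne (j : Fin l) : Fin.natAdd k j ≠ Fin.castAdd l i := by
      simp only [ne_eq, Fin.ext_iff, Fin.val_natAdd, Fin.val_castAdd]
      lia
    simpa [hne, Finset.prod_ite, Finset.filter_ne', Nat.sub_add_comm i.pos] using
      pow_mul_pow_le_lam0_mul_pow (k := k - 1) (l := l)
        (rhoPIn_nonneg A N c) (rhoMIn_nonneg A N c) hdeg
  | right i =>
    have hne (j : Fin k) : Fin.castAdd l j ≠ Fin.natAdd k i := by
      simp only [ne_eq, Fin.ext_iff, Fin.val_natAdd, Fin.val_castAdd]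
      lia
    simpa [hne, Finset.prod_ite, Finset.filter_ne', Nat.add_sub_assoc i.pos] using
      pow_mul_pow_le_lam0_mul_pow (k := k) (l := l - 1)
        (rhoPIn_nonneg A N c) (rhoMIn_nonneg A N c) hdeg

theorem muSet_center_leaf_le (hopp : ∀ u v, A u v → ¬A v u) (Z : Set V) (c v : V)
    (z : Fin (k + l)) :
    muSet {φ ∈ starsWithLeavesIn k l A Z | φ 0 = c ∧ φ z.succ = v}
      ≤ leafLam k l z * (muSet Z - rhoIn A Z v) ^ (k + l - 1) / Fintype.card V
        / Fintype.card V := by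
  refine (muSet_le_prod_leaves
    (B := Function.update (fun w => leafNbhd A c w ∩ nonNbhd A Z v) z {v})
    (fun φ hφ => hφ.2.1) fun φ hφ w => ?_).trans ?_
  · obtain ⟨⟨hemb, hleaf⟩, rfl, rfl⟩ := hφ
    rcases eq_or_ne w z with rfl | hw
    · simp
    · rw [Function.update_of_ne hw]
      exact ⟨hemb.mem_leafNbhd w, hemb.mem_nonNbhd (hleaf w)⟩
  · gcongr
    rw [← Finset.mul_prod_erase _ _ (Finset.mem_univ z), Function.update_self, muSet_singleton,
      one_div_mul_eq_div]
    gcongr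
    rw [← muSet_nonNbhd]
    refine le_trans (Finset.prod_congr rfl fun w hw => ?_).le
      (prod_erase_muSet_leafNbhd_le hopp (nonNbhd A Z v) c z)
    rw [Function.update_of_ne (Finset.ne_of_mem_erase hw)]

theorem muSet_leaf_le (hopp : ∀ u v, A u v → ¬A v u) (Z : Set V) (v : V) (z : Fin (k + l)) :
    muSet {φ ∈ starsWithLeavesIn k l A Z | φ z.succ = v}
      ≤ muSet {c | v ∈ leafNbhd A c z}
        * (leafLam k l z * (muSet Z - rhoIn A Z v) ^ (k + l - 1) / Fintype.card V) := by
  refine muSet_le_mul_of_fiber_le (f := fun φ => φ 0) (fun φ hφ => ?_) fun c _ => ?_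
  · exact hφ.2 ▸ hφ.1.1.mem_leafNbhd z
  · refine (muSet_mono fun φ hφ => ?_).trans (muSet_center_leaf_le hopp Z c v z)
    exact ⟨hφ.1.1, hφ.2, hφ.1.2⟩

theorem muSet_center_leaf_mem_le (hopp : ∀ u v, A u v → ¬A v u) {X : Set V} {T : ℝ}
    (hX : ∀ x ∈ X, 1 - rho A x ≤ T) (c : V) (z : Fin (k + l)) :
    muSet {φ | IsStarEmb k l A φ ∧ φ 0 = c ∧ φ z.succ ∈ X}
      ≤ muSet (leafNbhd A c z ∩ X) * (leafLam k l z * T ^ (k + l - 1) / Fintype.card V) := by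
  have : Nonempty V := ⟨c⟩
  refine muSet_le_mul_of_fiber_le (f := fun φ => φ z.succ) (fun φ hφ => ?_) fun x hx => ?_
  · exact ⟨hφ.2.1 ▸ hφ.1.mem_leafNbhd z, hφ.2.2⟩
  · have hle := muSet_center_leaf_le hopp Set.univ c x z
    simp only [mem_starsWithLeavesIn_univ, muSet_univ, rhoIn_univ] at hle
    have hlam := leafLam_pos z
    have hrho := rho_le_one A x
    refine (muSet_mono fun φ hφ => ?_).trans (hle.trans ?_)
    · exact ⟨hφ.1.1, hφ.1.2.1, hφ.2⟩
    · gcongr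
      exact hX x hx.2

end Stars

section Probabilities

variable {k l : ℕ} {V : Type*} [Fintype V] {A : V → V → Prop}

theorem starProbOn_eq_muSet (P : (Fin (k + l + 1) → V) → Prop) :
    starProbOn k l A P = muSet {φ | IsStarEmb k l A φ ∧ P φ} := by
  rw [muSet, Fintype.card_fun, Fintype.card_fin, Nat.cast_pow]
  rfl

theorem sCond_eq_muSet_mul (z : Fin (k + l + 1)) (v : V) :
    sCond k l A z v = muSet {φ | IsStarEmb k l A φ ∧ φ z = v} * Fintype.card V := by
  have : Nonempty V := ⟨v⟩
  rw [muSet, Fintype.card_fun, Fintype.card_fin, Nat.cast_pow, pow_succ, div_mul_eq_mul_div,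
    mul_div_mul_right _ _ (by positivity)]
  rfl

theorem sCond_zero_le (hopp : ∀ u v, A u v → ¬A v u) (v : V) :
    sCond k l A 0 v ≤ lam0 k l * rho A v ^ (k + l) := by
  have : Nonempty V := ⟨v⟩
  rw [sCond_eq_muSet_mul]
  calc muSet {φ | IsStarEmb k l A φ ∧ φ 0 = v} * Fintype.card V
      ≤ rhoPIn A Set.univ v ^ k * rhoMIn A Set.univ v ^ l / Fintype.card V * Fintype.card V := by
        gcongr
        simpa only [mem_starsWithLeavesIn_univ] using muSet_center_le k l A Set.univ v
    _ = rhoPIn A Set.univ v ^ k * rhoMIn A Set.univ v ^ l := by field_simp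
    _ ≤ lam0 k l * rho A v ^ (k + l) :=
        pow_mul_pow_le_lam0_mul_pow (rhoPIn_nonneg A _ v) (rhoMIn_nonneg A _ v)
          ((rhoPIn_add_rhoMIn hopp _ v).trans (rhoIn_univ A v)).le

theorem sCond_succ_le (hopp : ∀ u v, A u v → ¬A v u) (z : Fin (k + l)) (v : V) :
    sCond k l A z.succ v
      ≤ muSet {c | v ∈ leafNbhd A c z} * (leafLam k l z * (1 - rho A v) ^ (k + l - 1)) := by
  have : Nonempty V := ⟨v⟩
  rw [sCond_eq_muSet_mul]
  calc muSet {φ | IsStarEmb k l A φ ∧ φ z.succ = v} * Fintype.card V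
      ≤ muSet {c | v ∈ leafNbhd A c z}
          * (leafLam k l z * (muSet Set.univ - rhoIn A Set.univ v) ^ (k + l - 1)
            / Fintype.card V) * Fintype.card V := by
        gcongr
        simpa only [mem_starsWithLeavesIn_univ] using muSet_leaf_le hopp Set.univ v z
    _ = muSet {c | v ∈ leafNbhd A c z} * (leafLam k l z * (1 - rho A v) ^ (k + l - 1)) := by
        rw [muSet_univ, rhoIn_univ]
        field_simp

theorem muSet_mem_leafNbhd_castAdd (v : V) (i : Fin k) :
    muSet {c | v ∈ leafNbhd A c (Fin.castAdd l i)} = rhoMIn A Set.univ v := by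
  simp only [leafNbhd_castAdd, Set.mem_ofPred_eq, rhoMIn, Set.mem_univ, and_true]
  rfl

theorem muSet_mem_leafNbhd_natAdd (v : V) (i : Fin l) :
    muSet {c | v ∈ leafNbhd A c (Fin.natAdd k i)} = rhoPIn A Set.univ v := by
  simp only [leafNbhd_natAdd, Set.mem_ofPred_eq, rhoPIn, Set.mem_univ, and_true]
  rfl

theorem leafLam_mul_add_mul_le (k l : ℕ) {p q : ℝ} (hp : 0 ≤ p) (hq : 0 ≤ q) :
    k * (lam0 (k - 1) l * p) + l * (lam0 k (l - 1) * q)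
      ≤ Real.exp 1 * ((k : ℝ) + l) * lam0 k l * (p + q) := by
  have hout := natCast_mul_lam0_sub_one_le k l
  have hin := natCast_mul_lam0_sub_one_le l k
  rw [lam0_comm (l - 1) k, lam0_comm l k, add_comm (l : ℝ)] at hin
  linarith [mul_le_mul_of_nonneg_right hout hp, mul_le_mul_of_nonneg_right hin hq]

open Fin.NatCast in
theorem mul_sVert_le (hk : 1 ≤ k) (hl : 1 ≤ l) (hopp : ∀ u v, A u v → ¬A v u) (v : V) :
    ((k : ℝ) + l + 1) * sVert k l A v ≤ sCond k l A 0 v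
      + Real.exp 1 * ((k : ℝ) + l) * lam0 k l * (rho A v * (1 - rho A v) ^ (k + l - 1)) := by
  have houtleaf : (1 : Fin (k + l + 1)) = (Fin.castAdd l ⟨0, hk⟩).succ := by
    ext
    simp [Nat.mod_eq_of_lt (show 1 < k + l + 1 by lia)]
  have hinleaf : ((k + 1 : ℕ) : Fin (k + l + 1)) = (Fin.natAdd k ⟨0, hl⟩).succ := by
    ext
    rw [Fin.val_natCast]
    simp [Nat.mod_eq_of_lt (show k + 1 < k + l + 1 by lia)]
  have hout := sCond_succ_le hopp (Fin.castAdd l ⟨0, hk⟩) v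
  have hin := sCond_succ_le hopp (Fin.natAdd k ⟨0, hl⟩) v
  rw [muSet_mem_leafNbhd_castAdd, leafLam_castAdd] at hout
  rw [muSet_mem_leafNbhd_natAdd, leafLam_natAdd] at hin
  have hsum := leafLam_mul_add_mul_le k l (rhoMIn_nonneg A Set.univ v) (rhoPIn_nonneg A Set.univ v)
  rw [add_comm (rhoMIn A _ v), rhoPIn_add_rhoMIn hopp, rhoIn_univ] at hsum
  set t := (1 - rho A v) ^ (k + l - 1)
  have ht : 0 ≤ t := pow_nonneg (sub_nonneg.2 (rho_le_one A v)) _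
  rw [sVert, mul_div_cancel₀ _ (by positivity), houtleaf, hinleaf, add_assoc]
  gcongr
  calc l * sCond k l A (Fin.natAdd k ⟨0, hl⟩).succ v
        + k * sCond k l A (Fin.castAdd l ⟨0, hk⟩).succ v
      ≤ l * (rhoPIn A Set.univ v * (lam0 k (l - 1) * t))
        + k * (rhoMIn A Set.univ v * (lam0 (k - 1) l * t)) := by gcongr
    _ = (k * (lam0 (k - 1) l * rhoMIn A Set.univ v)
        + l * (lam0 k (l - 1) * rhoPIn A Set.univ v)) * t := by ring
    _ ≤ Real.exp 1 * ((k : ℝ) + l) * lam0 k l * rho A v * t := by gcongr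
    _ = Real.exp 1 * ((k : ℝ) + l) * lam0 k l * (rho A v * t) := by ring

theorem sum_muSet_leafNbhd_le (hopp : ∀ u v, A u v → ¬A v u) (X : Set V) (c : V) :
    ∑ z, leafLam k l z * muSet (leafNbhd A c z ∩ X)
      ≤ Real.exp 1 * ((k : ℝ) + l) * lam0 k l * rhoIn A X c := by
  rw [← rhoPIn_add_rhoMIn hopp, Fin.sum_univ_add]
  simpa [muSet_leafNbhd_castAdd, muSet_leafNbhd_natAdd, -leafNbhd_castAdd, -leafNbhd_natAdd] using
    leafLam_mul_add_mul_le k l (rhoPIn_nonneg A X c) (rhoMIn_nonneg A X c)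

theorem sCond_zero_le_of_one_sub_rho_le (hopp : ∀ u v, A u v → ¬A v u) {X : Set V} {T : ℝ}
    (hT : 0 ≤ T) (hX : ∀ x ∈ X, 1 - rho A x ≤ T) (c : V) :
    sCond k l A 0 c ≤ rhoPIn A Xᶜ c ^ k * rhoMIn A Xᶜ c ^ l
      + Real.exp 1 * ((k : ℝ) + l) * lam0 k l * rhoIn A X c * T ^ (k + l - 1) := by
  have : Nonempty V := ⟨c⟩
  have hcover : {φ : Fin (k + l + 1) → V | IsStarEmb k l A φ ∧ φ 0 = c}
      ⊆ {φ ∈ starsWithLeavesIn k l A Xᶜ | φ 0 = c}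
        ∪ ⋃ z : Fin (k + l), {φ | IsStarEmb k l A φ ∧ φ 0 = c ∧ φ z.succ ∈ X} := by
    rintro φ ⟨hφ, hc⟩
    by_cases hleaf : ∃ z : Fin (k + l), φ z.succ ∈ X
    · exact Or.inr (Set.mem_iUnion.2 (hleaf.imp fun _ hz => ⟨hφ, hc, hz⟩))
    · exact Or.inl ⟨⟨hφ, not_exists.1 hleaf⟩, hc⟩
  rw [sCond_eq_muSet_mul, ← le_div_iff₀ (by positivity), add_div]
  refine ((muSet_mono hcover).trans (muSet_union_le _ _)).trans
    (add_le_add (muSet_center_le k l A Xᶜ c) ((muSet_iUnion_le _).trans ?_))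
  calc ∑ z : Fin (k + l), muSet {φ | IsStarEmb k l A φ ∧ φ 0 = c ∧ φ z.succ ∈ X}
      ≤ ∑ z : Fin (k + l),
          muSet (leafNbhd A c z ∩ X) * (leafLam k l z * T ^ (k + l - 1) / Fintype.card V) :=
        Finset.sum_le_sum fun z _ => muSet_center_leaf_mem_le hopp hX c z
    _ = (∑ z : Fin (k + l), leafLam k l z * muSet (leafNbhd A c z ∩ X))
          * (T ^ (k + l - 1) / Fintype.card V) := by
        rw [Finset.sum_mul]
        exact Finset.sum_congr rfl fun z _ => by ring
    _ ≤ Real.exp 1 * ((k : ℝ) + l) * lam0 k l * rhoIn A X c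
          * (T ^ (k + l - 1) / Fintype.card V) := by
        gcongr
        exact sum_muSet_leafNbhd_le hopp X c
    _ = _ := by rw [mul_div_assoc]

end Probabilities

section LargeDegree

variable {k l : ℕ} {V : Type*} [Fintype V] {A : V → V → Prop}

theorem two_thirds_le_rho (hk : 1 ≤ k) (hl : 1 ≤ l) (hm : 6 ≤ k + l)
    (hopp : ∀ u v, A u v → ¬A v u) {x : V} (hx : x ∈ bigX A)
    (hvert : lam0 k l / Real.exp 1 ≤ ((k : ℝ) + l + 1) * sVert k l A x) : 2 / 3 ≤ rho A x := by
  refine two_thirds_le_of_inv_exp_le hm hx (le_of_mul_le_mul_left ?_ (lam0_pos k l))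
  push_cast
  calc lam0 k l * (1 / Real.exp 1) = lam0 k l / Real.exp 1 := by ring
    _ ≤ sCond k l A 0 x
          + Real.exp 1 * ((k : ℝ) + l) * lam0 k l * (rho A x * (1 - rho A x) ^ (k + l - 1)) :=
        hvert.trans (mul_sVert_le hk hl hopp x)
    _ ≤ lam0 k l * rho A x ^ (k + l)
          + Real.exp 1 * ((k : ℝ) + l) * lam0 k l * (rho A x * (1 - rho A x) ^ (k + l - 1)) := by
        gcongr
        exact sCond_zero_le hopp x
    _ = _ := by ring

theorem mul_pow_mul_pow_le_lam0 (hl : 1 ≤ l) {a g : ℝ} (ha : 0 ≤ a) (hg : 0 ≤ g)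
    (h : a + ((k : ℝ) + l) * g ≤ 1) : ((k : ℝ) + l) * (a ^ k * g ^ l) ≤ lam0 k l := by
  have hkl : (1 : ℝ) ≤ (k : ℝ) + l := by exact_mod_cast hl.trans (l.le_add_left k)
  calc ((k : ℝ) + l) * (a ^ k * g ^ l) ≤ ((k : ℝ) + l) ^ l * (a ^ k * g ^ l) := by
        gcongr
        exact le_self_pow₀ hkl (by lia)
    _ = a ^ k * (((k : ℝ) + l) * g) ^ l := by rw [mul_pow]; ring
    _ ≤ lam0 k l * 1 ^ (k + l) := pow_mul_pow_le_lam0_mul_pow ha (by positivity) h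
    _ = lam0 k l := by rw [one_pow, mul_one]

theorem natCast_mul_third_pow_sub_one_le {m : ℕ} (hm : 6 ≤ m) :
    m * (1 / 3 : ℝ) ^ (m - 1) ≤ 6 / 243 := by
  have h := natCast_mul_pow_le (r := 1 / 3) (by norm_num) (by norm_num) (by norm_num) hm
  obtain ⟨j, rfl⟩ : ∃ j, m = j + 1 := ⟨m - 1, by lia⟩
  rw [pow_succ] at h
  norm_num at h ⊢
  linarith

theorem one_sixth_add_lt_inv_exp_one {m : ℕ} (hm : 6 ≤ m) :
    1 / 6 + 2 * (Real.exp 1 * (m * (1 / 3) ^ (m - 1))) < 1 / Real.exp 1 := by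
  have he := Real.exp_one_lt_d9
  calc 1 / 6 + 2 * (Real.exp 1 * (m * (1 / 3) ^ (m - 1)))
      ≤ 1 / 6 + 2 * (2.7182818286 * (6 / 243)) := by
        gcongr
        exact natCast_mul_third_pow_sub_one_le hm
    _ < 1 / 2.7182818286 := by norm_num
    _ < 1 / Real.exp 1 := one_div_lt_one_div_of_lt (Real.exp_pos 1) he

theorem mul_rhoPIn_pow_mul_rhoMIn_pow_le_lam0 (hl : 1 ≤ l) (hopp : ∀ u v, A u v → ¬A v u)
    {X : Set V} {x : V} (hx : ((k + l - 1 : ℕ) : ℝ) * rhoMIn A Xᶜ x ≤ muSet X) :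
    ((k : ℝ) + l) * (rhoPIn A Xᶜ x ^ k * rhoMIn A Xᶜ x ^ l) ≤ lam0 k l := by
  have : Nonempty V := ⟨x⟩
  refine mul_pow_mul_pow_le_lam0 hl (rhoPIn_nonneg A _ x) (rhoMIn_nonneg A _ x) ?_
  have hsum : rhoPIn A Xᶜ x + rhoMIn A Xᶜ x ≤ 1 - muSet X :=
    (rhoPIn_add_rhoMIn hopp _ x).trans_le ((rhoIn_le_muSet A _ x).trans_eq (muSet_compl X))
  rw [Nat.cast_sub (hl.trans (l.le_add_left k))] at hx
  push_cast at hx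
  linarith

theorem alphaX_le_mul_rhoMIn_bigY (hk : 1 ≤ k) (hl : 1 ≤ l) (hm : 6 ≤ k + l)
    (hopp : ∀ u v, A u v → ¬A v u)
    (hvert : ∀ v, lam0 k l / Real.exp 1 ≤ ((k : ℝ) + l + 1) * sVert k l A v)
    {x : V} (hx : x ∈ bigX A) :
    alphaX A ≤ ((k + l - 1 : ℕ) : ℝ) * rhoMIn A (bigY A) x := by
  by_contra! hlt
  have : Nonempty V := ⟨x⟩
  have hrho (y : V) (hy : y ∈ bigX A) : 1 - rho A y ≤ 1 / 3 := by
    linarith [two_thirds_le_rho hk hl hm hopp hy (hvert y)]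
  have hlam := lam0_pos k l
  set E := Real.exp 1 * ((k : ℝ) + l) * lam0 k l with hE
  have hE0 : 0 ≤ E := by positivity
  have hbranch : rhoPIn A (bigY A) x ^ k * rhoMIn A (bigY A) x ^ l ≤ lam0 k l * (1 / 6) := by
    have hm' : (6 : ℝ) ≤ (k : ℝ) + l := by exact_mod_cast hm
    have hpos := mul_nonneg (pow_nonneg (rhoPIn_nonneg A (bigY A) x) k)
      (pow_nonneg (rhoMIn_nonneg A (bigY A) x) l)
    have hmul : ((k : ℝ) + l) * (rhoPIn A (bigY A) x ^ k * rhoMIn A (bigY A) x ^ l) ≤ lam0 k l :=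
      mul_rhoPIn_pow_mul_rhoMIn_pow_le_lam0 hl hopp hlt.le
    linarith [mul_le_mul_of_nonneg_right hm' hpos]
  have hcenter : sCond k l A 0 x ≤ lam0 k l * (1 / 6) + E * (1 / 3) ^ (k + l - 1) := by
    refine (sCond_zero_le_of_one_sub_rho_le hopp (by norm_num) hrho x).trans
      (add_le_add hbranch ?_)
    gcongr
    exact mul_le_of_le_one_right hE0 ((rhoIn_le_muSet A _ x).trans (muSet_le_one _))
  have hleaf : E * (rho A x * (1 - rho A x) ^ (k + l - 1)) ≤ E * (1 / 3) ^ (k + l - 1) :=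
    mul_le_mul_of_nonneg_left (rho_mul_one_sub_rho_pow_le A (hrho x hx) _) hE0
  have hnum := mul_lt_mul_of_pos_left (one_sixth_add_lt_inv_exp_one hm) hlam
  refine hnum.not_ge ?_
  calc lam0 k l * (1 / Real.exp 1) = lam0 k l / Real.exp 1 := by ring
    _ ≤ sCond k l A 0 x + E * (rho A x * (1 - rho A x) ^ (k + l - 1)) :=
        (hvert x).trans (mul_sVert_le hk hl hopp x)
    _ ≤ lam0 k l * (1 / 6) + E * (1 / 3) ^ (k + l - 1) + E * (1 / 3) ^ (k + l - 1) := by gcongr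
    _ = _ := by
        rw [hE]
        push_cast
        ring

end LargeDegree

section Counting

variable {k l : ℕ} {V : Type*} [Fintype V] {A : V → V → Prop}

theorem muSet_starsWithLeavesIn_le (hk : 1 ≤ k) (hopp : ∀ u v, A u v → ¬A v u) {X : Set V}
    (hX : ∀ x ∈ X, muSet X ≤ ((k + l - 1 : ℕ) : ℝ) * rhoMIn A Xᶜ x) :
    muSet (starsWithLeavesIn k l A X)
      ≤ ∑ᶠ x ∈ X, rhoMIn A Xᶜ x * (lam0 (k - 1) l * muSet X ^ (k + l - 1) / Fintype.card V) := by
  refine muSet_le_finsum_fiber (f := fun φ => φ (Fin.castAdd l ⟨0, hk⟩).succ)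
    (fun φ hφ => hφ.2 _) fun x hx => ?_
  have hmem := muSet_leaf_le hopp X x (Fin.castAdd l ⟨0, hk⟩ : Fin (k + l))
  rw [muSet_mem_leafNbhd_castAdd, leafLam_castAdd] at hmem
  have hlam := lam0_pos (k - 1) l
  have hsub : 0 ≤ muSet X - rhoIn A X x := sub_nonneg.2 (rhoIn_le_muSet A X x)
  have hin : rhoMIn A X x ≤ rhoIn A X x := by
    linarith [rhoPIn_add_rhoMIn hopp X x, rhoPIn_nonneg A X x]
  have hpt : rhoMIn A Set.univ x * (muSet X - rhoIn A X x) ^ (k + l - 1)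
      ≤ rhoMIn A Xᶜ x * muSet X ^ (k + l - 1) :=
    calc rhoMIn A Set.univ x * (muSet X - rhoIn A X x) ^ (k + l - 1)
        ≤ (rhoMIn A X x + rhoMIn A Xᶜ x) * (muSet X - rhoMIn A X x) ^ (k + l - 1) := by
          rw [← rhoMIn_univ]
          gcongr
          exact rhoMIn_nonneg A _ x
      _ ≤ rhoMIn A Xᶜ x * muSet X ^ (k + l - 1) :=
          add_mul_sub_pow_le (muSet_pos ⟨x, hx⟩) (hX x hx) (rhoMIn_nonneg A X x)
            (rhoMIn_le_muSet A X x)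
  calc muSet {φ ∈ starsWithLeavesIn k l A X | φ (Fin.castAdd l ⟨0, hk⟩).succ = x}
      ≤ lam0 (k - 1) l / Fintype.card V
          * (rhoMIn A Set.univ x * (muSet X - rhoIn A X x) ^ (k + l - 1)) :=
        hmem.trans_eq (by ring)
    _ ≤ lam0 (k - 1) l / Fintype.card V * (rhoMIn A Xᶜ x * muSet X ^ (k + l - 1)) := by gcongr
    _ = _ := by ring

theorem finsum_rhoMIn_bigY (hX : (bigX A).Nonempty) (hα : alphaX A ≠ 1) :
    ∑ᶠ x ∈ bigX A, rhoMIn A (bigY A) x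
      = (1 - dXY A) * (1 - alphaX A) * alphaX A * Fintype.card V := by
  have : Nonempty V := ⟨hX.some⟩
  have hcard : (Nat.card (bigX A) : ℝ) = alphaX A * Fintype.card V := by
    rw [alphaX, muSet]
    field_simp
  have hαpos : 0 < alphaX A := muSet_pos hX
  have hsub : 1 - alphaX A ≠ 0 := sub_ne_zero.2 hα.symm
  rw [dXY, hcard]
  field_simp
  ring

theorem starProbOn_add_starProbOn_le (k l : ℕ) (A : V → V → Prop) (X : Set V) :
    starProbOn k l A (fun φ => φ 0 ∈ Xᶜ ∧ ∀ a : Fin (k + l + 1), a ≠ 0 → φ a ∈ X)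
        + starProbOn k l A (fun φ => ∀ a, φ a ∈ X)
      ≤ muSet (starsWithLeavesIn k l A X) := by
  rw [starProbOn_eq_muSet, starProbOn_eq_muSet, ← muSet_union]
  · refine muSet_mono ?_
    rintro φ (⟨hφ, -, hleaf⟩ | ⟨hφ, hall⟩)
    · exact ⟨hφ, fun z => hleaf z.succ z.succ_ne_zero⟩
    · exact ⟨hφ, fun z => hall z.succ⟩
  · exact Set.disjoint_left.2 fun φ hY hX => hY.2.1 (hX.2 0)

end Counting

theorem stmt19_general {k l : ℕ} (hk : 1 ≤ k) (hl : 1 ≤ l) (hm : 6 ≤ k + l)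
    {V : Type*} [Fintype V] {A : V → V → Prop} (hopp : ∀ u v, A u v → ¬A v u)
    (hvert : ∀ v, lam0 k l / Real.exp 1 ≤ ((k : ℝ) + l + 1) * sVert k l A v)
    (hX : (bigX A).Nonempty) :
    (((k : ℝ) - 1) ^ (k - 1) * (l : ℝ) ^ l / ((k : ℝ) + l - 1) ^ (k + l - 1))
        * (1 - dXY A) * alphaX A ^ (k + l) * (1 - alphaX A)
      ≥ starProbOn k l A
          (fun φ => φ 0 ∈ bigY A ∧ ∀ a : Fin (k + l + 1), a ≠ 0 → φ a ∈ bigX A)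
        + starProbOn k l A (fun φ => ∀ a, φ a ∈ bigX A) := by
  have : Nonempty V := ⟨hX.some⟩
  have hγ (x : V) (hx : x ∈ bigX A) :=
    alphaX_le_mul_rhoMIn_bigY hk hl hm hopp hvert hx
  have hα : alphaX A ≠ 1 := by
    intro hone
    have hpos := (muSet_pos hX).trans_le (hγ _ hX.some_mem)
    have hY : rhoMIn A (bigY A) hX.some ≤ 1 - alphaX A :=
      (rhoMIn_le_muSet A _ _).trans_eq (muSet_compl (bigX A))
    linarith [pos_of_mul_pos_right hpos (Nat.cast_nonneg _)]
  calc starProbOn k l A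
          (fun φ => φ 0 ∈ bigY A ∧ ∀ a : Fin (k + l + 1), a ≠ 0 → φ a ∈ bigX A)
        + starProbOn k l A (fun φ => ∀ a, φ a ∈ bigX A)
      ≤ muSet (starsWithLeavesIn k l A (bigX A)) := starProbOn_add_starProbOn_le k l A (bigX A)
    _ ≤ ∑ᶠ x ∈ bigX A, rhoMIn A (bigY A) x
          * (lam0 (k - 1) l * alphaX A ^ (k + l - 1) / Fintype.card V) :=
        muSet_starsWithLeavesIn_le hk hopp hγ
    _ = (1 - dXY A) * (1 - alphaX A) * alphaX A * Fintype.card V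
          * (lam0 (k - 1) l * alphaX A ^ (k + l - 1) / Fintype.card V) := by
        rw [← finsum_rhoMIn_bigY hX hα, finsum_mem_mul]
    _ = lam0 (k - 1) l * (1 - dXY A) * alphaX A ^ (k + l) * (1 - alphaX A) := by
        rw [← mul_pow_sub_one (n := k + l) (by lia)]
        field_simp
    _ = _ := by rw [lam0_sub_one_left hk]

theorem stmt19 (k l : ℕ) (hl : 1 ≤ l) (hlk : l ≤ k) (hm : 6 ≤ k + l)
    (V : Type) [Fintype V] (A : V → V → Prop)
    (hirr : Irreflexive A) (hopp : ∀ u v, A u v → ¬ A v u) (hn : 1 ≤ Fintype.card V)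
    (hvert : ∀ v : V, OPT k l ≤ sVert k l A v)
    (hX : (bigX A).Nonempty) (hY : (bigY A).Nonempty) :
    (((k : ℝ) - 1) ^ (k - 1) * (l : ℝ) ^ l / ((k : ℝ) + l - 1) ^ (k + l - 1))
        * (1 - dXY A) * alphaX A ^ (k + l) * (1 - alphaX A)
      ≥ starProbOn k l A
          (fun φ => φ 0 ∈ bigY A ∧ ∀ a : Fin (k + l + 1), a ≠ 0 → φ a ∈ bigX A)
        + starProbOn k l A (fun φ => ∀ a, φ a ∈ bigX A) :=
  stmt19_general (hl.trans hlk) hl hm hopp (fun v =>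
    (lam0_div_exp_one_le_OPT (hl.trans hlk)).trans (by gcongr; exact hvert v)) hX
end
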